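/- arXiv:1012.5783 — 3 statements merged into one kernel-verified Lean document; each statement's English description precedes it below -/
import Mathlib

section
/- The set of generic functions is dense in C^1(S^1, ℝ^2), where a C^1 function f: S^1 → ℝ^2 is generic if it is an immersion and its image has at most finitely many multiple points, all of which are clean double points. -/
open Set Real Filter Topology

noncomputable section

abbrev Circ := AddCircle (2 * π)

def liftOf (F : Circ → ℝ × ℝ) : ℝ → ℝ × ℝ := fun t => F (t : Circ)

def IsC1 (F : Circ → ℝ × ℝ) : Prop := ContDiff ℝ 1 (liftOf F)

def tangentAt (F : Circ → ℝ × ℝ) (t : ℝ) : Submodule ℝ (ℝ × ℝ) :=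
  Submodule.span ℝ {deriv (liftOf F) t}

def Generic (F : Circ → ℝ × ℝ) : Prop :=
  IsC1 F ∧ (∀ t : ℝ, deriv (liftOf F) t ≠ 0) ∧
  {p : ℝ × ℝ | ∃ x y : Circ, x ≠ y ∧ F x = p ∧ F y = p}.Finite ∧
  (∀ p : ℝ × ℝ, (∃ x y : Circ, x ≠ y ∧ F x = p ∧ F y = p) →
    ∃ x y : Circ, x ≠ y ∧ {z : Circ | F z = p} = {x, y}) ∧
  (∀ t₁ t₂ : ℝ, liftOf F t₁ = liftOf F t₂ → tangentAt F t₁ = tangentAt F t₂ →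
    (t₁ : Circ) = (t₂ : Circ))

def Dset (u : ℝ × ℝ) : Set (ℝ × ℝ) := {w | w.1 ≤ u.1 ∧ w.2 ≤ u.2}

def persBetti (F : Circ → ℝ × ℝ) (u v : ℝ × ℝ) : ℕ :=
  ((fun x => connectedComponentIn (F ⁻¹' Dset v) x) '' (F ⁻¹' Dset u)).ncard

def Sigma2 : Set ((ℝ × ℝ) → (ℝ × ℝ)) :=
  {id, fun p => (-p.1, p.2), fun p => (p.1, -p.2), fun p => (-p.1, -p.2)}

def CircleDiffeo (H : Circ → Circ) : Prop :=
  ∃ h : ℝ → ℝ, ContDiff ℝ 1 h ∧ (∀ t, deriv h t ≠ 0) ∧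
    ((∀ t, h (t + 2 * π) = h t + 2 * π) ∨ (∀ t, h (t + 2 * π) = h t - 2 * π)) ∧
    (∀ t : ℝ, H (t : Circ) = ((h t : ℝ) : Circ))

def C1dist (F G : Circ → ℝ × ℝ) : ℝ :=
  ⨆ t : ℝ, (‖liftOf F t - liftOf G t‖ + ‖deriv (liftOf F) t - deriv (liftOf G) t‖)

def cross (a b : ℝ × ℝ) : ℝ := a.1 * b.2 - a.2 * b.1

lemma mv_aux (u u' : ℝ → ℂ) (hu : ∀ s, HasDerivAt u (u' s) s) (t h δ : ℝ) (hh : 0 < h)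
    (hd : ∀ s, |s - t| ≤ h → ‖u' s - u' t‖ ≤ δ) :
    ‖(h:ℝ)⁻¹ • (u (t + h) - u t) - u' t‖ ≤ δ := by
  have key := (convex_Icc t (t+h)).norm_image_sub_le_of_norm_hasDerivWithin_le
    (f := fun s => u s - (s - t) • u' t) (f' := fun s => u' s - u' t) (C := δ) (x := t) (y := t+h)
    (fun s _ => by
      have := (hu s).sub (((hasDerivAt_id s).sub_const t).smul_const (u' t))
      simp only [one_smul, id] at this
      exact this.hasDerivWithinAt)
    (fun s hs => hd s (by rw [abs_le]; constructor <;> linarith [hs.1, hs.2]))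
    ⟨le_refl _, by linarith⟩ ⟨by linarith, le_refl _⟩
  have e : (h:ℝ)⁻¹ • (u (t + h) - u t) - u' t
      = (h:ℝ)⁻¹ • ((u (t+h) - (t + h - t) • u' t) - (u t - (t - t) • u' t)) := by
    rw [show t + h - t = h by ring]
    simp only [smul_sub, smul_smul, inv_mul_cancel₀ hh.ne', sub_self, zero_smul, one_smul, smul_zero]
    ring
  rw [e, norm_smul, norm_inv, Real.norm_of_nonneg hh.le]
  have : ‖t + h - t‖ = h := by rw [show t + h - t = h by ring, Real.norm_of_nonneg hh.le]
  rw [this] at key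
  rw [inv_mul_le_iff₀ hh]
  linarith

lemma per_uc (u : ℝ → ℂ) (hu : Continuous u) (hp : Function.Periodic u (2 * π)) :
    UniformContinuous u := by
  have : Fact (0 < 2 * π) := ⟨by positivity⟩
  have hl : Continuous (hp.lift : Circ → ℂ) := continuous_coinduced_dom.2 hu
  have h1 := CompactSpace.uniformContinuous_of_continuous hl
  have h2 : UniformContinuous ((↑) : ℝ → Circ) :=
    uniformContinuous_of_continuousAt_zero (QuotientAddGroup.mk' (AddSubgroup.zmultiples (2 * π)))
      (AddCircle.continuous_mk' _).continuousAt
  exact h1.comp h2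

lemma steklov (f₀ : ℝ → ℂ) (hf : ContDiff ℝ 1 f₀) (hp : ∀ t, f₀ (t + 2 * π) = f₀ t)
    (δ : ℝ) (hδ : 0 < δ) : ∃ f : ℝ → ℂ, ContDiff ℝ 2 f ∧ (∀ t, f (t + 2 * π) = f t) ∧
      ∀ t, ‖f t - f₀ t‖ ≤ δ ∧ ‖deriv f t - deriv f₀ t‖ ≤ δ := by
  have hT : (0:ℝ) < 2 * π := by positivity
  have hc : Continuous f₀ := hf.continuous
  have hc' : Continuous (deriv f₀) := hf.continuous_deriv le_rfl
  have hp' : Function.Periodic (deriv f₀) (2 * π) := by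
    intro t
    rw [← deriv_comp_add_const]
    congr 1
    funext s; exact hp s
  have u1 := per_uc f₀ hc hp
  have u2 := per_uc _ hc' hp'
  rw [Metric.uniformContinuous_iff] at u1 u2
  obtain ⟨h1, h1p, H1⟩ := u1 δ hδ
  obtain ⟨h2, h2p, H2⟩ := u2 δ hδ
  obtain ⟨h, hh, hl⟩ := exists_between (lt_min h1p h2p)
  have hl1 : h < h1 := lt_of_lt_of_le hl (min_le_left _ _)
  have hl2 : h < h2 := lt_of_lt_of_le hl (min_le_right _ _)
  set Φ : ℝ → ℂ := fun t => ∫ s in (0:ℝ)..t, f₀ s with hΦ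
  have dΦ : ∀ t, HasDerivAt Φ (f₀ t) t := fun t =>
    intervalIntegral.integral_hasDerivAt_right (hc.intervalIntegrable _ _)
      (hc.stronglyMeasurableAtFilter _ _) hc.continuousAt
  have cΦ : ContDiff ℝ 2 Φ := by
    have : (2 : WithTop ℕ∞) = 1 + 1 := by norm_num
    rw [this, contDiff_succ_iff_deriv]
    refine ⟨fun t => (dΦ t).differentiableAt, by simp, ?_⟩
    have : deriv Φ = f₀ := funext fun t => (dΦ t).deriv
    rw [this]; exact hf
  have df : ∀ t, HasDerivAt (fun t => h⁻¹ • (Φ (t + h) - Φ t)) (h⁻¹ • (f₀ (t + h) - f₀ t)) t := by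
    intro t
    exact (((dΦ (t+h)).comp_add_const t h).sub (dΦ t)).const_smul h⁻¹
  refine ⟨fun t => h⁻¹ • (Φ (t + h) - Φ t), ?_, ?_, ?_⟩
  · exact ((cΦ.comp (contDiff_id.add contDiff_const)).sub cΦ).const_smul h⁻¹
  · intro t
    have : ∀ t, Φ (t + h) - Φ t = ∫ s in t..(t+h), f₀ s := fun t => 
      intervalIntegral.integral_interval_sub_left (hc.intervalIntegrable _ _) (hc.intervalIntegrable _ _)
    simp only [this]
    congr 1
    rw [show t + 2 * π + h = (t + h) + 2 * π by ring, ← intervalIntegral.integral_comp_add_right]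
    simp only [hp]
  · intro t
    constructor
    · exact mv_aux Φ f₀ dΦ t h δ hh (fun s hs => by
        rw [← dist_eq_norm]; exact (H1 (by rw [Real.dist_eq]; linarith)).le)
    · rw [(df t).deriv]
      exact mv_aux f₀ (deriv f₀) (fun s => (hf.differentiable (by norm_num) s).hasDerivAt) t h δ hh (fun s hs => by
        rw [← dist_eq_norm]; exact (H2 (by rw [Real.dist_eq]; linarith)).le)


def EE (t : ℝ) : ℂ := Complex.exp (t * Complex.I)

lemma EE_cd {n : WithTop ℕ∞} : ContDiff ℝ n EE := by
  unfold EE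
  exact (Complex.ofRealCLM.contDiff.mul contDiff_const).cexp

lemma EE_norm (t : ℝ) : ‖EE t‖ = 1 := Complex.norm_exp_ofReal_mul_I t

lemma EE_ne (t : ℝ) : EE t ≠ 0 := Complex.exp_ne_zero _

lemma EE_pi (t : ℝ) : EE (t + π) = - EE t := by
  unfold EE
  push_cast
  rw [add_mul, Complex.exp_add, Complex.exp_pi_mul_I]; ring

lemma EE_per (t : ℝ) : EE (t + 2 * π) = EE t := by
  rw [show t + 2 * π = t + π + π by ring, EE_pi, EE_pi, neg_neg]

lemma EE_eq {s t : ℝ} (h : EE s = EE t) : ∃ n : ℤ, s = t + n * (2 * π) := by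
  obtain ⟨n, hn⟩ := Complex.exp_eq_exp_iff_exists_int.1 h
  refine ⟨n, ?_⟩
  have : ((s : ℝ) : ℂ) = ((t + n * (2 * π) : ℝ) : ℂ) := by
    apply mul_right_cancel₀ Complex.I_ne_zero
    rw [hn]; push_cast; ring
  exact_mod_cast this

lemma EE_eq_iff {s t : ℝ} : EE s = EE t ↔ (s : Circ) = (t : Circ) := by
  constructor
  · intro h
    obtain ⟨n, rfl⟩ := EE_eq h
    rw [← sub_eq_zero, ← AddCircle.coe_sub, AddCircle.coe_eq_zero_iff]
    exact ⟨n, by simp⟩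
  · intro h
    have hp : Function.Periodic EE (2 * π) := EE_per
    have := congrArg hp.lift h
    simpa using this

lemma EE_deriv (t : ℝ) : HasDerivAt EE (Complex.I * EE t) t := by
  have h := ((Complex.ofRealCLM.hasDerivAt (x := t)).mul_const Complex.I).cexp
  simp only [Complex.ofRealCLM_apply, Complex.ofReal_one, one_mul] at h
  rw [mul_comm]
  exact h

lemma dim_aux {X : Type*} [NormedAddCommGroup X] [NormedSpace ℝ X] [FiniteDimensional ℝ X]
    (hX : Module.finrank ℝ X = 3) (φ : X → ℂ × ℂ) (s : Set X)
    (h : ∀ x ∈ s, ContDiffAt ℝ 1 φ x) : dimH (φ '' s) ≤ 3 := by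
  have h1 : dimH (φ '' s) ≤ dimH s := dimH_image_le_of_locally_lipschitzOn fun x hx => by
    obtain ⟨K, t, ht, hL⟩ := (h x hx).exists_lipschitzOnWith
    exact ⟨K, t, mem_nhdsWithin_of_mem_nhds ht, hL⟩
  refine h1.trans ((dimH_mono (subset_univ s)).trans ?_)
  rw [Real.dimH_univ_eq_finrank X, hX]; norm_num

lemma cdiv {X : Type*} [NormedAddCommGroup X] [NormedSpace ℝ X] {u v : X → ℂ} {x : X}
    (hu : ContDiffAt ℝ 1 u x) (hv : ContDiffAt ℝ 1 v x) (h : v x ≠ 0) :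
    ContDiffAt ℝ 1 (fun x => u x / v x) x := by
  simp only [div_eq_mul_inv]
  exact hu.mul (hv.inv h)

lemma core (f : ℝ → ℂ) (hf : ContDiff ℝ 2 f) (hp : ∀ t, f (t + 2 * π) = f t)
    (η : ℝ) (hη : 0 < η) : ∃ a b : ℂ, ‖a‖ < η ∧ ‖b‖ < η ∧
    (∀ t, deriv f t + Complex.I * (a * EE t + 2 * b * EE t ^ 2) ≠ 0) ∧
    (∀ t₁ t₂ t₃, EE t₁ ≠ EE t₂ → EE t₁ ≠ EE t₃ → EE t₂ ≠ EE t₃ →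
      f t₁ + a * EE t₁ + b * EE t₁ ^ 2 = f t₂ + a * EE t₂ + b * EE t₂ ^ 2 →
      f t₁ + a * EE t₁ + b * EE t₁ ^ 2 = f t₃ + a * EE t₃ + b * EE t₃ ^ 2 → False) ∧
    (∀ t₁ t₂, ∀ l : ℝ, EE t₁ ≠ EE t₂ →
      f t₁ + a * EE t₁ + b * EE t₁ ^ 2 = f t₂ + a * EE t₂ + b * EE t₂ ^ 2 →
      deriv f t₁ + Complex.I * (a * EE t₁ + 2 * b * EE t₁ ^ 2) =
        l * (deriv f t₂ + Complex.I * (a * EE t₂ + 2 * b * EE t₂ ^ 2)) → False) := by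
  have hf1 : ContDiff ℝ 1 f := hf.of_le (by norm_num)
  have hd1 : ContDiff ℝ 1 (deriv f) := by
    have h2 : (2 : WithTop ℕ∞) = 1 + 1 := by norm_num
    rw [h2, contDiff_succ_iff_deriv] at hf
    exact hf.2.2
  have hE : ContDiff ℝ 1 EE := EE_cd
  have hco : ContDiff ℝ 1 (fun x : ℝ => (x : ℂ)) := Complex.ofRealCLM.contDiff
  -- the four parametrized bad sets
  let φ1 : ℝ × ℂ → ℂ × ℂ := fun p =>
    ((Complex.I * deriv f p.1 - 2 * p.2 * EE p.1 ^ 2) / EE p.1, p.2)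
  let φ2 : ℝ × ℂ → ℂ × ℂ := fun p => (- (f p.1 - f (p.1 + π)) / (2 * EE p.1), p.2)
  let b3 : ℝ × ℝ × ℝ → ℂ := fun p =>
    - ((f p.1 - f p.2.1) / (EE p.1 - EE p.2.1) - (f p.1 - f p.2.2) / (EE p.1 - EE p.2.2))
      / (EE p.2.1 - EE p.2.2)
  let φ3 : ℝ × ℝ × ℝ → ℂ × ℂ := fun p =>
    (- ((f p.1 - f p.2.1) / (EE p.1 - EE p.2.1)) - b3 p * (EE p.1 + EE p.2.1), b3 p)
  let s3 : Set (ℝ × ℝ × ℝ) := {p | EE p.1 ≠ EE p.2.1 ∧ EE p.1 ≠ EE p.2.2 ∧ EE p.2.1 ≠ EE p.2.2}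
  let q : ℝ × ℝ × ℝ → ℂ := fun p => (f p.1 - f p.2.1) / (EE p.1 - EE p.2.1)
  let b4 : ℝ × ℝ × ℝ → ℂ := fun p =>
    (Complex.I * q p * EE p.1 - deriv f p.1 - (p.2.2 : ℂ) * Complex.I * q p * EE p.2.1
      + (p.2.2 : ℂ) * deriv f p.2.1) /
      (Complex.I * (EE p.1 - EE p.2.1) * (EE p.1 + (p.2.2 : ℂ) * EE p.2.1))
  let φ4 : ℝ × ℝ × ℝ → ℂ × ℂ := fun p => (- q p - b4 p * (EE p.1 + EE p.2.1), b4 p)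
  let s4 : Set (ℝ × ℝ × ℝ) := {p | EE p.1 ≠ EE p.2.1 ∧ EE p.1 + (p.2.2 : ℂ) * EE p.2.1 ≠ 0}
  have r1 : Module.finrank ℝ (ℝ × ℂ) = 3 := by simp
  have r2 : Module.finrank ℝ (ℝ × ℝ × ℝ) = 3 := by simp
  have d1 : dimH (φ1 '' univ) ≤ 3 := by
    refine dim_aux r1 _ _ fun p _ => ?_
    have e1 := EE_ne p.1
    exact ContDiffAt.prodMk (cdiv (by fun_prop) (by fun_prop) e1) (by fun_prop)
  have d2 : dimH (φ2 '' univ) ≤ 3 := by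
    refine dim_aux r1 _ _ fun p _ => ?_
    have e1 : 2 * EE p.1 ≠ 0 := mul_ne_zero two_ne_zero (EE_ne p.1)
    exact ContDiffAt.prodMk (cdiv (by fun_prop) (by fun_prop) e1) (by fun_prop)
  have d3 : dimH (φ3 '' s3) ≤ 3 := by
    refine dim_aux r2 _ _ fun p hp => ?_
    obtain ⟨h12, h13, h23⟩ := hp
    have c1 : ContDiffAt ℝ 1 (fun p : ℝ × ℝ × ℝ => (f p.1 - f p.2.1) / (EE p.1 - EE p.2.1)) p :=
      cdiv (by fun_prop) (by fun_prop) (sub_ne_zero.2 h12)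
    have c2 : ContDiffAt ℝ 1 (fun p : ℝ × ℝ × ℝ => (f p.1 - f p.2.2) / (EE p.1 - EE p.2.2)) p :=
      cdiv (by fun_prop) (by fun_prop) (sub_ne_zero.2 h13)
    have c3 : ContDiffAt ℝ 1 b3 p :=
      cdiv (c1.sub c2).neg (by fun_prop) (sub_ne_zero.2 h23)
    exact ContDiffAt.prodMk (c1.neg.sub (c3.mul (by fun_prop))) c3
  have d4 : dimH (φ4 '' s4) ≤ 3 := by
    refine dim_aux r2 _ _ fun p hp => ?_
    obtain ⟨h12, h13⟩ := hp
    have c1 : ContDiffAt ℝ 1 q p :=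
      cdiv (by fun_prop) (by fun_prop) (sub_ne_zero.2 h12)
    have c3 : ContDiffAt ℝ 1 b4 p :=
      cdiv (by fun_prop) (by fun_prop)
        (mul_ne_zero (mul_ne_zero Complex.I_ne_zero (sub_ne_zero.2 h12)) h13)
    exact ContDiffAt.prodMk (c1.neg.sub (c3.mul (by fun_prop))) c3
  have dB : dimH (φ1 '' univ ∪ φ2 '' univ ∪ (φ3 '' s3 ∪ φ4 '' s4)) < Module.finrank ℝ (ℂ × ℂ) := by
    have r4 : Module.finrank ℝ (ℂ × ℂ) = 4 := by simp
    rw [r4, dimH_union, dimH_union, dimH_union]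
    refine lt_of_le_of_lt (max_le (max_le d1 d2) (max_le d3 d4)) ?_
    norm_num
  have dense := dense_compl_of_dimH_lt_finrank dB
  obtain ⟨⟨a, b⟩, hab, hn⟩ := Metric.dense_iff.1 dense 0 η hη
  rw [mem_ball_zero_iff, Prod.norm_def, max_lt_iff] at hab
  have quo : ∀ t₁ t₂, EE t₁ ≠ EE t₂ →
      f t₁ + a * EE t₁ + b * EE t₁ ^ 2 = f t₂ + a * EE t₂ + b * EE t₂ ^ 2 →
      (f t₁ - f t₂) / (EE t₁ - EE t₂) = - (a + b * (EE t₁ + EE t₂)) := by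
    intro t₁ t₂ h12 h
    rw [div_eq_iff (sub_ne_zero.2 h12)]
    linear_combination h
  refine ⟨a, b, hab.1, hab.2, ?_, ?_, ?_⟩
  · intro t ht
    refine hn (Or.inl (Or.inl ⟨(t, b), trivial, Prod.ext ?_ rfl⟩))
    change (Complex.I * deriv f t - 2 * b * EE t ^ 2) / EE t = a
    rw [div_eq_iff (EE_ne t)]
    linear_combination Complex.I * ht - (a * EE t + 2 * b * EE t ^ 2) * Complex.I_sq
  · intro t₁ t₂ t₃ h12 h13 h23 e12 e13
    have hb : b3 (t₁, t₂, t₃) = b := by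
      change - ((f t₁ - f t₂) / (EE t₁ - EE t₂) - (f t₁ - f t₃) / (EE t₁ - EE t₃))
        / (EE t₂ - EE t₃) = b
      rw [quo _ _ h12 e12, quo _ _ h13 e13, div_eq_iff (sub_ne_zero.2 h23)]
      ring
    refine hn (Or.inr (Or.inl ⟨(t₁, t₂, t₃), ⟨h12, h13, h23⟩, Prod.ext ?_ hb⟩))
    change - ((f t₁ - f t₂) / (EE t₁ - EE t₂)) - b3 (t₁, t₂, t₃) * (EE t₁ + EE t₂) = a
    rw [hb, quo _ _ h12 e12]; ring
  · intro t₁ t₂ l h12 e12 el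
    by_cases h0 : EE t₁ + (l : ℂ) * EE t₂ = 0
    · have h1 : EE t₁ = - (l : ℂ) * EE t₂ := by linear_combination h0
      have h2 := congrArg norm h1
      rw [norm_mul, norm_neg, EE_norm, EE_norm, Complex.norm_real, mul_one, Real.norm_eq_abs] at h2
      rcases (abs_eq zero_le_one).1 h2.symm with hl | hl
      · have h3 : EE t₂ = EE (t₁ + π) := by
          rw [EE_pi, h1, hl]; simp
        obtain ⟨n, hn2⟩ := EE_eq h3
        have hf2 : f t₂ = f (t₁ + π) := by
          rw [hn2]
          have := (show Function.Periodic f (2 * π) from hp).int_mul n (t₁ + π)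
          exact this
        have hz : EE t₂ = - EE t₁ := by rw [h3, EE_pi]
        refine hn (Or.inl (Or.inr ⟨(t₁, b), trivial, Prod.ext ?_ rfl⟩))
        change - (f t₁ - f (t₁ + π)) / (2 * EE t₁) = a
        rw [div_eq_iff (mul_ne_zero two_ne_zero (EE_ne t₁)), ← hf2]
        rw [hz] at e12
        linear_combination - e12
      · apply h12; rw [h1, hl]; simp
    · have hb : b4 (t₁, t₂, l) = b := by
        change (Complex.I * ((f t₁ - f t₂) / (EE t₁ - EE t₂)) * EE t₁ - deriv f t₁
          - (l : ℂ) * Complex.I * ((f t₁ - f t₂) / (EE t₁ - EE t₂)) * EE t₂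
          + (l : ℂ) * deriv f t₂) /
          (Complex.I * (EE t₁ - EE t₂) * (EE t₁ + (l : ℂ) * EE t₂)) = b
        rw [quo _ _ h12 e12, div_eq_iff
          (mul_ne_zero (mul_ne_zero Complex.I_ne_zero (sub_ne_zero.2 h12)) h0)]
        linear_combination - el
      refine hn (Or.inr (Or.inr ⟨(t₁, t₂, l), ⟨h12, h0⟩, Prod.ext ?_ hb⟩))
      change - ((f t₁ - f t₂) / (EE t₁ - EE t₂)) - b4 (t₁, t₂, l) * (EE t₁ + EE t₂) = a
      rw [hb, quo _ _ h12 e12]; ring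


lemma strict_inj {X : Type*} [NormedAddCommGroup X] [NormedSpace ℝ X] [FiniteDimensional ℝ X]
    {D : X → ℂ} {L : X →L[ℝ] ℂ} {x : X} (h : HasStrictFDerivAt D L x)
    (hL : ∀ v, L v = 0 → v = 0) : ∃ U ∈ 𝓝 x, InjOn D U := by
  have hker : LinearMap.ker (L : X →ₗ[ℝ] ℂ) = ⊥ := LinearMap.ker_eq_bot'.2 hL
  obtain ⟨K, hK, hA⟩ := LinearMap.exists_antilipschitzWith (L : X →ₗ[ℝ] ℂ) hker
  have hKr : (0:ℝ) < K := hK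
  obtain ⟨U, hU, hap⟩ := h.approximates_deriv_on_nhds (c := (2 * K)⁻¹) (Or.inr (by positivity))
  refine ⟨U, hU, fun y hy z hz hyz => ?_⟩
  have h1 := hap y hy z hz
  rw [hyz, sub_self, zero_sub, norm_neg] at h1
  have h2 := hA.le_mul_dist y z
  rw [dist_eq_norm, dist_eq_norm, ← map_sub] at h2
  have h3 : ‖y - z‖ ≤ K * ‖L (y - z)‖ := h2
  have h4 : K * ‖L (y - z)‖ ≤ K * (((2 * K)⁻¹ : NNReal) * ‖y - z‖) := by gcongr
  have h5 : (K:ℝ) * (((2 * K)⁻¹ : NNReal) * ‖y - z‖) = ‖y - z‖ / 2 := by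
    push_cast; field_simp
  have h6 : ‖y - z‖ ≤ 0 := by linarith
  exact sub_eq_zero.1 (norm_le_zero_iff.1 h6)

lemma fin_aux (g : ℝ → ℂ) (hg : ContDiff ℝ 1 g) (hp : ∀ t, g (t + 2 * π) = g t)
    (h1 : ∀ t, deriv g t ≠ 0)
    (h2 : ∀ s t, ∀ l : ℝ, EE s ≠ EE t → g s = g t → deriv g s = l * deriv g t → False) :
    {p : ℝ × ℝ | p ∈ Icc 0 (0 + 2 * π) ×ˢ Icc 0 (0 + 2 * π) ∧ EE p.1 ≠ EE p.2 ∧ g p.1 = g p.2}.Finite := by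
  by_contra hinf
  have hsd : ∀ t, HasStrictDerivAt g (deriv g t) t := fun t =>
    (hg.contDiffAt.hasStrictDerivAt (by norm_num))
  obtain ⟨⟨s, t⟩, -, hacc⟩ := Set.Infinite.exists_accPt_of_subset_isCompact hinf
    (isCompact_Icc.prod isCompact_Icc) (fun p hp => hp.1)
  rw [accPt_iff_frequently] at hacc
  by_cases he : EE t = EE s
  · obtain ⟨n, hn⟩ := EE_eq he
    obtain ⟨U, hU, hinj⟩ := strict_inj (hsd s).hasStrictFDerivAt (fun v hv => by
      simpa [h1 s] using hv)
    have e1 : ∀ᶠ p : ℝ × ℝ in 𝓝 (s, t), p.1 ∈ U :=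
      (continuous_fst.tendsto (s, t)).eventually hU
    have e2 : ∀ᶠ p : ℝ × ℝ in 𝓝 (s, t), p.2 - n * (2 * π) ∈ U := by
      have hc : Continuous (fun p : ℝ × ℝ => p.2 - n * (2 * π)) := by fun_prop
      refine (hc.tendsto (s, t)).eventually (?_ : U ∈ _)
      simpa [hn] using hU
    obtain ⟨p, ⟨-, -, hne, heq⟩, p1, p2⟩ := (hacc.and_eventually (e1.and e2)).exists
    have hper := (show Function.Periodic g (2 * π) from hp).sub_int_mul_eq n (x := p.2)
    have := hinj p1 p2 (by rw [heq, ← hper])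
    apply hne
    rw [this]
    exact (show Function.Periodic EE (2 * π) from EE_per).sub_int_mul_eq n (x := p.2)
  · have hst : g s = g t := by
      have hcl : IsClosed {p : ℝ × ℝ | g p.1 = g p.2} :=
        isClosed_eq (hg.continuous.comp continuous_fst) (hg.continuous.comp continuous_snd)
      have : (s, t) ∈ closure {p : ℝ × ℝ | g p.1 = g p.2} :=
        mem_closure_iff_frequently.2 (hacc.mono fun p hp => hp.2.2.2)
      rw [hcl.closure_eq] at this
      exact this
    have hD := ((hsd s).hasStrictFDerivAt.comp (s, t) (hasStrictFDerivAt_fst (𝕜 := ℝ) (p := (s, t)))).sub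
      ((hsd t).hasStrictFDerivAt.comp (s, t) (hasStrictFDerivAt_snd (𝕜 := ℝ) (p := (s, t))))
    obtain ⟨U, hU, hinj⟩ := strict_inj hD (fun v hv => by
      obtain ⟨x, y⟩ := v
      have hv' : (x : ℂ) * deriv g s - y * deriv g t = 0 := by simpa using hv
      by_cases hx : x = 0
      · subst hx
        have : y = 0 := by simpa [h1 t] using hv'
        rw [this]; rfl
      · exfalso
        have hx' : (x : ℂ) ≠ 0 := by exact_mod_cast hx
        refine h2 s t (y / x) (fun h => he h.symm) hst ?_
        push_cast
        field_simp
        linear_combination hv')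
    obtain ⟨p, ⟨hne, -, -, heq⟩, p1⟩ := (hacc.and_eventually hU).exists
    apply hne
    apply hinj p1 (mem_of_mem_nhds hU)
    simp [heq, hst]

/-- The set of generic functions is dense in `C¹(S¹, ℝ²)` (with the C¹ topology,
expressed via the C¹ distance). -/
theorem generic_dense (F : Circ → ℝ × ℝ) (hF : IsC1 F) :
    ∀ ε : ℝ, 0 < ε → ∃ G : Circ → ℝ × ℝ, Generic G ∧ C1dist F G < ε := by
  intro ε hε
  let e := Complex.equivRealProdCLM
  have hFd : ContDiff ℝ 1 (liftOf F) := hF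
  have he_le : ∀ z : ℂ, ‖e z‖ ≤ ‖z‖ := Complex.equivRealProd_apply_le
  set f₀ : ℝ → ℂ := fun t => e.symm (liftOf F t) with hf₀
  have hf₀c : ContDiff ℝ 1 f₀ := e.symm.contDiff.comp hFd
  have hf₀p : ∀ t, f₀ (t + 2 * π) = f₀ t := by
    intro t
    simp [hf₀, liftOf]
  have hFf : ∀ t, liftOf F t = e (f₀ t) := fun t => by simp [hf₀]
  have hFf' : ∀ t, deriv (liftOf F) t = e (deriv f₀ t) := fun t => by
    have h : HasDerivAt f₀ (deriv f₀ t) t := (hf₀c.differentiable (by norm_num) t).hasDerivAt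
    have := e.hasFDerivAt.comp_hasDerivAt t h
    have hh : liftOf F = e ∘ f₀ := funext hFf
    rw [hh]
    exact this.deriv
  obtain ⟨f, hf, hfp, hfa⟩ := steklov f₀ hf₀c hf₀p (ε / 14) (by positivity)
  obtain ⟨a, b, ha, hb, B1, B2, B3⟩ := core f hf hfp (ε / 14) (by positivity)
  set g : ℝ → ℂ := fun t => f t + a * EE t + b * EE t ^ 2 with hgdef
  have hf1 : ContDiff ℝ 1 f := hf.of_le (by norm_num)
  have hE : ContDiff ℝ 1 EE := EE_cd
  have hg : ContDiff ℝ 1 g := by fun_prop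
  have hgp : ∀ t, g (t + 2 * π) = g t := fun t => by simp only [hgdef, hfp, EE_per]
  have hgd : ∀ t, HasDerivAt g (deriv f t + Complex.I * (a * EE t + 2 * b * EE t ^ 2)) t := by
    intro t
    have h : HasDerivAt f (deriv f t) t := (hf1.differentiable (by norm_num) t).hasDerivAt
    have := (h.add ((EE_deriv t).const_mul a)).add (((EE_deriv t).pow 2).const_mul b)
    refine this.congr_deriv ?_
    push_cast; ring
  have hgd' : ∀ t, deriv g t = _ := fun t => (hgd t).deriv
  have hG : Function.Periodic (fun t => e (g t)) (2 * π) := fun t => by simp only [hgp]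
  let G : Circ → ℝ × ℝ := hG.lift
  have hGc : ∀ t : ℝ, G (t : Circ) = e (g t) := fun t => hG.lift_coe t
  have hlG : liftOf G = fun t => e (g t) := funext hGc
  have hdG : ∀ t, deriv (liftOf G) t = e (deriv g t) := fun t => by
    rw [hlG]
    have h : HasDerivAt g (deriv g t) t := (hg.differentiable (by norm_num) t).hasDerivAt
    exact (e.hasFDerivAt.comp_hasDerivAt t h).deriv
  have him : ∀ t, deriv g t ≠ 0 := fun t => by rw [hgd']; exact B1 t
  have hcl : ∀ s t, ∀ l : ℝ, EE s ≠ EE t → g s = g t → deriv g s = l * deriv g t → False := by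
    intro s t l h1 h2 h3
    rw [hgd', hgd'] at h3
    exact B3 s t l h1 h2 h3
  have hrep : ∀ x : Circ, ∃ t ∈ Icc (0:ℝ) (0 + 2 * π), (t : Circ) = x := by
    intro x
    have : Fact (0 < 2 * π) := ⟨by positivity⟩
    have hx : x ∈ ((↑) : ℝ → Circ) '' Icc 0 (0 + 2 * π) := by
      rw [AddCircle.coe_image_Icc_eq]; trivial
    exact hx
  have hfin := fin_aux g hg hgp him hcl
  refine ⟨G, ⟨?_, ?_, ?_, ?_, ?_⟩, ?_⟩
  · unfold IsC1
    rw [hlG]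
    exact e.contDiff.comp hg
  · intro t
    rw [hdG]
    simpa using him t
  · refine (hfin.image (fun p => e (g p.1))).subset ?_
    rintro p ⟨x, y, hxy, hx, hy⟩
    obtain ⟨s, hs, rfl⟩ := hrep x
    obtain ⟨t, ht, rfl⟩ := hrep y
    rw [hGc] at hx hy
    exact ⟨(s, t), ⟨⟨hs, ht⟩, fun h => hxy (EE_eq_iff.1 h), e.injective (hx.trans hy.symm)⟩, hx⟩
  · rintro p ⟨x, y, hxy, hx, hy⟩
    refine ⟨x, y, hxy, ?_⟩
    ext z
    simp only [mem_ofPred_eq, mem_insert_iff, mem_singleton_iff]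
    constructor
    · intro hz
      by_contra hc
      push Not at hc
      obtain ⟨s, hs, rfl⟩ := hrep x
      obtain ⟨t, ht, rfl⟩ := hrep y
      obtain ⟨r, hr, rfl⟩ := hrep z
      rw [hGc] at hx hy hz
      exact B2 s t r (fun h => hxy (EE_eq_iff.1 h)) (fun h => hc.1 (EE_eq_iff.1 h).symm)
        (fun h => hc.2 (EE_eq_iff.1 h).symm) (e.injective (hx.trans hy.symm))
        (e.injective (hx.trans hz.symm))
    · rintro (rfl | rfl) <;> assumption
  · intro s t hst htan
    by_contra hne
    have hm : deriv (liftOf G) s ∈ tangentAt G t := by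
      rw [← htan]
      exact Submodule.mem_span_singleton_self _
    obtain ⟨l, hl⟩ := Submodule.mem_span_singleton.1 hm
    rw [hdG, hdG, ← map_smul] at hl
    have hl' := e.injective hl
    refine hcl s t l (fun h => hne (EE_eq_iff.1 h)) ?_ ?_
    · apply e.injective
      simpa only [hlG] using hst
    · rw [← hl', Complex.real_smul]
  · have hb' : C1dist F G ≤ ε / 2 := by
      refine ciSup_le fun t => ?_
      rw [hdG, hFf', hFf, hlG]
      change ‖e (f₀ t) - e (g t)‖ + _ ≤ _
      rw [← map_sub, ← map_sub]
      have n1 := he_le (f₀ t - g t)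
      have n2 := he_le (deriv f₀ t - deriv g t)
      obtain ⟨a1, a2⟩ := hfa t
      have m1 : ‖f₀ t - g t‖ ≤ ‖f t - f₀ t‖ + ‖a‖ + ‖b‖ := by
        have : f₀ t - g t = - ((f t - f₀ t) + a * EE t + b * EE t ^ 2) := by
          simp only [hgdef]; ring
        rw [this, norm_neg]
        refine norm_add₃_le.trans (le_of_eq ?_)
        simp [EE_norm]
      have m2 : ‖deriv f₀ t - deriv g t‖ ≤ ‖deriv f t - deriv f₀ t‖ + ‖a‖ + 2 * ‖b‖ := by
        have : deriv f₀ t - deriv g t = - ((deriv f t - deriv f₀ t) + Complex.I * a * EE t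
            + 2 * Complex.I * b * EE t ^ 2) := by
          rw [hgd']; ring
        rw [this, norm_neg]
        refine norm_add₃_le.trans (le_of_eq ?_)
        simp [EE_norm]
      linarith
    linarith
end
end

section
/- Let f, g: S^1 → ℝ^2 be generic functions such that H_0^{u,v}(s∘f) = H_0^{u,v}(s∘g) for every (u,v) ∈ Δ^+ and every s in the group Σ_2 generated by reflections in the coordinate axes. Then f(S^1) = g(S^1). -/
open Set Real Filter Topology

noncomputable section

instance instFactTwoPiPos : Fact (0 < 2 * π) := ⟨by positivity⟩

/-- terminal points of a subset of the circle -/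
def TermPts (S : Set Circ) : Set Circ := {z | z ∈ S ∧ ∃ᶠ (e : ℝ) in 𝓝[>] (0:ℝ), z + (e : Circ) ∉ S}

def C1R (φ : Circ → ℝ) : Prop := ContDiff ℝ 1 (fun t : ℝ => φ (t : Circ))

def RV (φ : Circ → ℝ) (a : ℝ) : Prop :=
  ∀ t : ℝ, φ (t : Circ) = a → deriv (fun t : ℝ => φ (t : Circ)) t ≠ 0

lemma coe_cont : Continuous (fun t : ℝ => (t : Circ)) := AddCircle.continuous_mk' _

lemma C1R.cont {φ : Circ → ℝ} (h : C1R φ) : Continuous φ := by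
  have : Continuous (fun t : ℝ => φ (t : Circ)) := ContDiff.continuous h
  exact (QuotientAddGroup.isQuotientMap_mk _).continuous_iff.2 this

lemma C1R.hasDeriv {φ : Circ → ℝ} (h : C1R φ) (t : ℝ) :
    HasDerivAt (fun t : ℝ => φ (t : Circ)) (deriv (fun t : ℝ => φ (t : Circ)) t) t :=
  ((ContDiff.differentiable h (by norm_num)) t).hasDerivAt

lemma coe_surj (z : Circ) (a : ℝ) : ∃ t ∈ Ico a (a + 2 * π), (t : Circ) = z := by
  have : z ∈ ((↑) : ℝ → Circ) '' Ico a (a + 2 * π) := by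
    rw [AddCircle.coe_image_Ico_eq]; trivial
  exact this

lemma freq_gt {S : Set Circ} {t d : ℝ} (h : ∃ᶠ (e : ℝ) in 𝓝[>] (0:ℝ), (t : Circ) + (e : Circ) ∉ S)
    (hd : t < d) : ∃ r, t < r ∧ r < d ∧ (r : Circ) ∉ S := by
  have h1 : ∀ᶠ (e : ℝ) in 𝓝[>] (0:ℝ), e ∈ Ioo 0 (d - t) := Ioo_mem_nhdsGT (by linarith)
  obtain ⟨e, he, he2⟩ := (h.and_eventually h1).exists
  exact ⟨t + e, by linarith [he2.1], by linarith [he2.2], by simpa using he⟩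

lemma termPts_injOn (S : Set Circ) : InjOn (fun x => connectedComponentIn S x) (TermPts S) := by
  intro z hz z' hz' heq
  by_contra hne
  obtain ⟨t, ht, rfl⟩ := coe_surj z 0
  obtain ⟨t', ht', rfl⟩ := coe_surj z' t
  have hlt : t < t' := lt_of_le_of_ne ht'.1 (by rintro rfl; exact hne rfl)
  obtain ⟨r, hr1, hr2, hr⟩ := freq_gt hz.2 hlt
  obtain ⟨q, hq1, hq2, hq⟩ := freq_gt hz'.2 ht'.2
  set C := connectedComponentIn S (t : Circ) with hC
  have hCS : C ⊆ S := connectedComponentIn_subset _ _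
  have hCp : IsPreconnected C := isPreconnected_connectedComponentIn
  have htC : (t : Circ) ∈ C := mem_connectedComponentIn hz.1
  have ht'C : (t' : Circ) ∈ C := by
    have : C = connectedComponentIn S (t' : Circ) := heq
    rw [this]; exact mem_connectedComponentIn hz'.1
  have hop : IsOpenMap (fun t : ℝ => (t : Circ)) := QuotientAddGroup.isOpenMap_coe
  have hU := hop _ (isOpen_Ioo (a := r) (b := q))
  have hV := hop _ (isOpen_Ioo (a := q) (b := r + 2 * π))
  have hdis : Disjoint ((fun t : ℝ => (t : Circ)) '' Ioo r q)
      ((fun t : ℝ => (t : Circ)) '' Ioo q (r + 2 * π)) := by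
    rw [Set.disjoint_left]
    rintro _ ⟨a, ha, rfl⟩ ⟨b, hb, hab⟩
    have := (AddCircle.coe_eq_coe_iff_of_mem_Ico (p := 2 * π) (a := r) (x := b) (y := a)
      ⟨by linarith [hb.1], hb.2⟩ ⟨ha.1.le, by linarith [ha.2]⟩).1 hab
    linarith [ha.2, hb.1]
  have hcov : C ⊆ ((fun t : ℝ => (t : Circ)) '' Ioo r q) ∪
      ((fun t : ℝ => (t : Circ)) '' Ioo q (r + 2 * π)) := by
    intro w hw
    obtain ⟨s, hs, rfl⟩ := coe_surj w r
    have h1 : s ≠ r := by rintro rfl; exact hr (hCS hw)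
    have h2 : s ≠ q := by rintro rfl; exact hq (hCS hw)
    rcases lt_or_gt_of_ne h2 with h | h
    · exact Or.inl ⟨s, ⟨lt_of_le_of_ne hs.1 h1.symm, h⟩, rfl⟩
    · exact Or.inr ⟨s, ⟨h, hs.2⟩, rfl⟩
  have hsub := hCp.subset_left_of_subset_union hU hV hdis hcov
    ⟨_, ht'C, ⟨t', ⟨hr2, hq1⟩, rfl⟩⟩
  have h3 := hsub htC
  refine Set.disjoint_left.1 hdis h3 ⟨t + 2 * π, ⟨hq2, by linarith⟩, ?_⟩
  exact AddCircle.coe_add_period _ _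

lemma conn_path {S : Set Circ} {a b : ℝ} (hab : a ≤ b) (h : ∀ t ∈ Icc a b, (t : Circ) ∈ S) :
    connectedComponentIn S (a : Circ) = connectedComponentIn S (b : Circ) := by
  apply connectedComponentIn_eq
  have : IsPreconnected ((fun t : ℝ => (t : Circ)) '' Icc a b) :=
    isPreconnected_Icc.image _ coe_cont.continuousOn
  refine this.subset_connectedComponentIn ⟨a, ⟨le_rfl, hab⟩, rfl⟩ ?_ ⟨b, ⟨hab, le_rfl⟩, rfl⟩
  rintro _ ⟨t, ht, rfl⟩
  exact h t ht

lemma termPts_image {S : Set Circ} (hS : IsClosed S) (hne : S ≠ univ) :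
    (fun x => connectedComponentIn S x) '' TermPts S = (fun x => connectedComponentIn S x) '' S := by
  apply Subset.antisymm (image_mono fun z hz => hz.1)
  rintro _ ⟨x, hx, rfl⟩
  obtain ⟨t, ht, rfl⟩ := coe_surj x 0
  obtain ⟨w, hw⟩ := (Set.ne_univ_iff_exists_notMem S).1 hne
  obtain ⟨d, hd, rfl⟩ := coe_surj w t
  set T : Set ℝ := {b | t ≤ b ∧ ∀ s ∈ Icc t b, (s : Circ) ∈ S} with hT
  have hbd : ∀ b ∈ T, b ≤ d := by
    intro b hb
    by_contra hlt
    exact hw (hb.2 d ⟨hd.1, by linarith⟩)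
  have htT : t ∈ T := ⟨le_rfl, fun s hs => by
    have : s = t := le_antisymm hs.2 hs.1
    rwa [this]⟩
  have hlub := isLUB_csSup ⟨t, htT⟩ ⟨d, hbd⟩
  set b := sSup T with hb
  have htb : t ≤ b := hlub.1 htT
  have hIco : ∀ s ∈ Ico t b, (s : Circ) ∈ S := by
    intro s hs
    obtain ⟨c, hc, hsc⟩ := (lt_isLUB_iff hlub).1 hs.2
    exact hc.2 s ⟨hs.1, hsc.le⟩
  have hIcc : ∀ s ∈ Icc t b, (s : Circ) ∈ S := by
    rcases htb.eq_or_lt with h | h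
    · intro s hs
      rw [← h] at hs
      exact htT.2 s hs
    · have hcl : IsClosed ((fun t : ℝ => (t : Circ)) ⁻¹' S) := hS.preimage coe_cont
      have := closure_minimal (s := Ico t b) (fun s hs => hIco s hs) hcl
      rw [closure_Ico h.ne] at this
      exact this
  refine ⟨b, ⟨hIcc b ⟨htb, le_rfl⟩, ?_⟩, (conn_path htb hIcc).symm⟩
  rw [Filter.Frequently, (nhdsGT_basis (0:ℝ)).eventually_iff]
  rintro ⟨e, he, hh⟩
  simp only [not_not] at hh
  have : b + e / 2 ∈ T := by
    refine ⟨by linarith, fun s hs => ?_⟩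
    rcases le_or_gt s b with h | h
    · exact hIcc s ⟨hs.1, h⟩
    · have := hh (x := s - b) ⟨by linarith, by linarith [hs.2]⟩
      rw [← AddCircle.coe_add] at this
      simpa using this
  have := hlub.1 this
  linarith

/-- number of components -/
def NC (S : Set Circ) : ℕ := ((fun x => connectedComponentIn S x) '' S).ncard

lemma NC_eq {S : Set Circ} (hS : IsClosed S) (hne : S ≠ univ) : NC S = (TermPts S).ncard := by
  rw [NC, ← termPts_image hS hne, (termPts_injOn S).ncard_image]

lemma deriv_pos_ev {f : ℝ → ℝ} {c t : ℝ} (h : HasDerivAt f c t) (hc : 0 < c) :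
    ∀ᶠ (e : ℝ) in 𝓝[>] (0:ℝ), f t < f (t + e) ∧ f (t - e) < f t := by
  have h1 := h.tendsto_slope_zero_right.eventually (lt_mem_nhds hc)
  have h2 := h.tendsto_slope_zero_left.eventually (lt_mem_nhds hc)
  have h3 : Tendsto (fun e : ℝ => -e) (𝓝[>] 0) (𝓝[<] 0) := by
    have := tendsto_neg_nhdsGT (a := (0:ℝ))
    simpa using this
  filter_upwards [h1, h3.eventually h2, self_mem_nhdsWithin] with e h1 h2 he
  have he : 0 < e := he
  simp only [smul_eq_mul] at h1 h2
  constructor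
  · have := (pos_iff_pos_of_mul_pos h1).1 (inv_pos.2 he)
    linarith
  · have := (neg_iff_neg_of_mul_pos h2).1 (inv_lt_zero.2 (by linarith))
    rw [← sub_eq_add_neg] at this
    linarith

lemma RV.neg {φ : Circ → ℝ} {a : ℝ} (h : RV φ a) : RV (fun z => - φ z) (-a) := by
  intro t ht
  have := h t (neg_injective ht)
  rw [deriv.fun_neg]
  simpa using this

lemma C1R.neg {φ : Circ → ℝ} (h : C1R φ) : C1R (fun z => - φ z) := ContDiff.neg h

lemma cont_ev {φ : Circ → ℝ} (h : Continuous φ) (z : Circ) {U : Set ℝ} (hU : IsOpen U)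
    (hz : φ z ∈ U) : ∀ᶠ (e : ℝ) in 𝓝[>] (0:ℝ), φ (z + (e : Circ)) ∈ U ∧ φ (z - (e : Circ)) ∈ U := by
  have c1 : Continuous (fun e : ℝ => φ (z + (e : Circ))) := h.comp (continuous_const.add coe_cont)
  have c2 : Continuous (fun e : ℝ => φ (z - (e : Circ))) := h.comp (continuous_const.sub coe_cont)
  have e1 := c1.continuousAt.eventually_mem (x := 0) (s := U) (hU.mem_nhds (by simpa using hz))
  have e2 := c2.continuousAt.eventually_mem (x := 0) (s := U) (hU.mem_nhds (by simpa using hz))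
  exact (e1.and e2).filter_mono nhdsWithin_le_nhds

/-- local behaviour at a regular point -/
lemma RV.dir {φ : Circ → ℝ} {a : ℝ} (hc : C1R φ) (h : RV φ a) {z : Circ} (hz : φ z = a) :
    (∀ᶠ (e : ℝ) in 𝓝[>] (0:ℝ), a < φ (z + (e : Circ)) ∧ φ (z - (e : Circ)) < a) ∨
    (∀ᶠ (e : ℝ) in 𝓝[>] (0:ℝ), φ (z + (e : Circ)) < a ∧ a < φ (z - (e : Circ))) := by
  obtain ⟨t, -, rfl⟩ := coe_surj z 0
  rcases lt_or_gt_of_ne (h t hz) with h1 | h1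
  · right
    have := deriv_pos_ev (hc.hasDeriv t).neg (by linarith)
    filter_upwards [this] with e he
    simp only [Pi.neg_apply, AddCircle.coe_add, AddCircle.coe_sub, hz] at he
    constructor <;> linarith [he.1, he.2]
  · left
    have := deriv_pos_ev (hc.hasDeriv t) h1
    filter_upwards [this] with e he
    simpa only [AddCircle.coe_add, AddCircle.coe_sub, hz] using he

lemma RV.finite {φ : Circ → ℝ} {a : ℝ} (hc : C1R φ) (h : RV φ a) : {z | φ z = a}.Finite := by
  have hfin : {t : ℝ | t ∈ Icc 0 (0 + 2 * π) ∧ φ (t : Circ) = a}.Finite := by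
    by_contra hinf
    obtain ⟨t, ht, hacc⟩ := Set.Infinite.exists_accPt_of_subset_isCompact hinf
      (isCompact_Icc (a := 0) (b := 0 + 2 * π)) (fun t ht => ht.1)
    have hcont : Continuous (fun t : ℝ => φ (t : Circ)) := hc.cont.comp coe_cont
    have hcl : IsClosed {t : ℝ | φ (t : Circ) = a} := isClosed_eq hcont continuous_const
    have hfr : ∃ᶠ (s : ℝ) in 𝓝[≠] t, φ (s : Circ) = a :=
      (accPt_iff_frequently_nhdsNE.1 hacc).mono fun s hs => hs.2
    have hta : φ (t : Circ) = a := by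
      have : t ∈ closure {t : ℝ | φ (t : Circ) = a} :=
        (hfr.filter_mono nhdsWithin_le_nhds).mem_closure
      rwa [hcl.closure_eq] at this
    exact hfr ((hc.hasDeriv t).eventually_ne (h t hta))
  refine (hfin.image (fun t : ℝ => (t : Circ))).subset ?_
  intro z hz
  obtain ⟨t, ht, rfl⟩ := coe_surj z 0
  exact ⟨t, ⟨⟨ht.1, ht.2.le⟩, hz⟩, rfl⟩

def QS (X Y : Circ → ℝ) (a b : ℝ) : Set Circ := {z | X z ≤ a ∧ Y z ≤ b}

lemma QS_comm (X Y : Circ → ℝ) (a b : ℝ) : QS X Y a b = QS Y X b a := by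
  ext z; simp [QS, and_comm]

lemma QS_closed {X Y : Circ → ℝ} (hX : C1R X) (hY : C1R Y) (a b : ℝ) : IsClosed (QS X Y a b) :=
  (isClosed_le hX.cont continuous_const).inter (isClosed_le hY.cont continuous_const)

lemma int_rep_aux {X Y : Circ → ℝ} (hX : C1R X) (hY : C1R Y) {a b : ℝ} (ha : RV X a)
    {z : Circ} (hz : X z = a) (hb : Y z < b) :
    ∃ y, X y < a ∧ Y y < b ∧
      connectedComponentIn (QS X Y a b) y = connectedComponentIn (QS X Y a b) z := by
  have hev := cont_ev hY.cont z isOpen_Iio hb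
  rcases ha.dir hX hz with h | h
  · obtain ⟨e, he, hh⟩ := (nhdsGT_basis (0:ℝ)).eventually_iff.1 (h.and hev)
    obtain ⟨t, -, rfl⟩ := coe_surj z 0
    have key : ∀ s, t - e < s → s < t → X (s : Circ) < a ∧ Y (s : Circ) < b := by
      intro s h1 h2
      have := hh (x := t - s) ⟨by linarith, by linarith⟩
      simp only [AddCircle.coe_sub, sub_sub_cancel] at this
      exact ⟨this.1.2, this.2.2⟩
    obtain ⟨k1, k2⟩ := key (t - e / 2) (by linarith) (by linarith)
    refine ⟨_, k1, k2, conn_path (by linarith) ?_⟩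
    intro s hs
    rcases hs.2.lt_or_eq with h1 | rfl
    · have := key s (by linarith [hs.1]) h1
      exact ⟨this.1.le, this.2.le⟩
    · exact ⟨hz.le, hb.le⟩
  · obtain ⟨e, he, hh⟩ := (nhdsGT_basis (0:ℝ)).eventually_iff.1 (h.and hev)
    obtain ⟨t, -, rfl⟩ := coe_surj z 0
    have key : ∀ s, t < s → s < t + e → X (s : Circ) < a ∧ Y (s : Circ) < b := by
      intro s h1 h2
      have := hh (x := s - t) ⟨by linarith, by linarith⟩
      rw [← AddCircle.coe_add, add_sub_cancel] at this
      exact ⟨this.1.1, this.2.1⟩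
    obtain ⟨k1, k2⟩ := key (t + e / 2) (by linarith) (by linarith)
    refine ⟨_, k1, k2, (conn_path (by linarith) ?_).symm⟩
    intro s hs
    rcases hs.1.lt_or_eq with h1 | rfl
    · have := key s h1 (by linarith [hs.2])
      exact ⟨this.1.le, this.2.le⟩
    · exact ⟨hz.le, hb.le⟩

lemma int_rep {X Y : Circ → ℝ} (hX : C1R X) (hY : C1R Y) {a b : ℝ} (ha : RV X a) (hb : RV Y b)
    (hab : ∀ z, X z = a → Y z ≠ b) {z : Circ} (hz : z ∈ QS X Y a b) :
    ∃ y, X y < a ∧ Y y < b ∧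
      connectedComponentIn (QS X Y a b) y = connectedComponentIn (QS X Y a b) z := by
  rcases hz.1.lt_or_eq with h1 | h1
  · rcases hz.2.lt_or_eq with h2 | h2
    · exact ⟨z, h1, h2, rfl⟩
    · rw [QS_comm]
      obtain ⟨y, k1, k2, k3⟩ := int_rep_aux hY hX hb h2 h1
      exact ⟨y, k2, k1, k3⟩
  · exact int_rep_aux hX hY ha h1 (lt_of_le_of_ne hz.2 (hab z h1))

lemma termPts_finite {X Y : Circ → ℝ} (hX : C1R X) (hY : C1R Y) {a b : ℝ} (ha : RV X a)
    (hb : RV Y b) : (TermPts (QS X Y a b)).Finite := by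
  refine ((ha.finite hX).union (hb.finite hY)).subset ?_
  rintro z ⟨hz, hf⟩
  by_contra hcon
  simp only [mem_union, mem_ofPred_eq, not_or] at hcon
  have e1 := cont_ev hX.cont z isOpen_Iio (lt_of_le_of_ne hz.1 hcon.1)
  have e2 := cont_ev hY.cont z isOpen_Iio (lt_of_le_of_ne hz.2 hcon.2)
  apply hf
  filter_upwards [e1, e2] with e h1 h2
  rw [not_not]
  exact ⟨le_of_lt h1.1, le_of_lt h2.1⟩

lemma comps_finite {X Y : Circ → ℝ} (hX : C1R X) (hY : C1R Y) {a b : ℝ} (ha : RV X a)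
    (hb : RV Y b) :
    ((fun x => connectedComponentIn (QS X Y a b) x) '' (QS X Y a b)).Finite := by
  by_cases h : QS X Y a b = univ
  · rw [h]
    apply Set.Subsingleton.finite
    rintro _ ⟨x, -, rfl⟩ _ ⟨y, -, rfl⟩
    simp only [connectedComponentIn_univ]
    rw [PreconnectedSpace.connectedComponent_eq_univ, PreconnectedSpace.connectedComponent_eq_univ]
  · rw [← termPts_image (QS_closed hX hY a b) h]
    exact (termPts_finite hX hY ha hb).image _

lemma pers_ev {X Y : Circ → ℝ} (hX : C1R X) (hY : C1R Y) {a b : ℝ} (ha : RV X a) (hb : RV Y b)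
    (hab : ∀ z, X z = a → Y z ≠ b) :
    ∀ᶠ (e : ℝ) in 𝓝[>] (0:ℝ),
      ((fun x => connectedComponentIn (QS X Y a b) x) '' (QS X Y (a - e) (b - e))).ncard
        = NC (QS X Y a b) := by
  have key : ∀ c ∈ ((fun x => connectedComponentIn (QS X Y a b) x) '' (QS X Y a b)),
      ∀ᶠ (e : ℝ) in 𝓝[>] (0:ℝ),
        c ∈ (fun x => connectedComponentIn (QS X Y a b) x) '' (QS X Y (a - e) (b - e)) := by
    rintro _ ⟨z, hz, rfl⟩
    obtain ⟨y, h1, h2, h3⟩ := int_rep hX hY ha hb hab hz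
    have e1 : ∀ᶠ (e : ℝ) in 𝓝[>] (0:ℝ), e ∈ Ioo 0 (a - X y) := Ioo_mem_nhdsGT (by linarith)
    have e2 : ∀ᶠ (e : ℝ) in 𝓝[>] (0:ℝ), e ∈ Ioo 0 (b - Y y) := Ioo_mem_nhdsGT (by linarith)
    filter_upwards [e1, e2] with e g1 g2
    exact ⟨y, ⟨by linarith [g1.2], by linarith [g2.2]⟩, h3⟩
  filter_upwards [(eventually_all_finite (comps_finite hX hY ha hb)).2 key,
    self_mem_nhdsWithin] with e he he0
  have he0 : 0 < e := he0
  rw [NC]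
  congr 1
  apply Subset.antisymm
  · apply image_mono
    intro z hz
    exact ⟨by linarith [hz.1], by linarith [hz.2]⟩
  · exact he

lemma count {X Y : Circ → ℝ} (hX : C1R X) (hY : C1R Y) {a b M : ℝ} (ha : RV X a) (hb : RV Y b)
    (hab : ∀ z, X z = a → Y z ≠ b) (hM : ∀ z, X z < M) (hne : ∃ z, b < Y z) :
    NC (QS X Y a b) + NC (QS (fun z => - X z) Y (-a) b) =
      NC (QS X Y M b) + {z | X z = a ∧ Y z < b}.ncard := by
  have hRM : RV X M := fun t ht => absurd ht (hM _).ne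
  obtain ⟨w, hw⟩ := hne
  have nu : ∀ (X : Circ → ℝ) (a : ℝ), QS X Y a b ≠ univ := fun X a h => by
    have : w ∈ QS X Y a b := h ▸ mem_univ w
    linarith [this.2]
  rw [NC_eq (QS_closed hX hY _ _) (nu _ _), NC_eq (QS_closed hX.neg hY _ _) (nu _ _),
    NC_eq (QS_closed hX hY _ _) (nu _ _)]
  have f1 := termPts_finite hX hY ha hb
  have f2 := termPts_finite hX.neg hY ha.neg hb
  have f3 := termPts_finite hX hY hRM hb
  have f4 : {z | X z = a ∧ Y z < b}.Finite := (ha.finite hX).subset fun z hz => hz.1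
  have key : ∀ z, ((z ∈ TermPts (QS X Y a b) ∨ z ∈ TermPts (QS (fun z => - X z) Y (-a) b)) ↔
      (z ∈ TermPts (QS X Y M b) ∨ z ∈ {z | X z = a ∧ Y z < b})) ∧
      ¬ (z ∈ TermPts (QS X Y a b) ∧ z ∈ TermPts (QS (fun z => - X z) Y (-a) b)) ∧
      ¬ (z ∈ TermPts (QS X Y M b) ∧ z ∈ {z | X z = a ∧ Y z < b}) := by
    intro z
    rcases lt_trichotomy (X z) a with h | h | h
    · have n1 : z ∉ TermPts (QS (fun z => - X z) Y (-a) b) := fun hz => by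
        have := hz.1.1
        simp only at this
        linarith
      have n2 : z ∉ {z | X z = a ∧ Y z < b} := fun hz => h.ne hz.1
      have n3 : z ∈ TermPts (QS X Y a b) ↔ z ∈ TermPts (QS X Y M b) := by
        apply and_congr
        · simp [QS, h.le, (hM z).le]
        · apply frequently_congr
          filter_upwards [cont_ev hX.cont z isOpen_Iio h] with e he
          have : X (z + (e : Circ)) ≤ a := le_of_lt he.1
          simp [QS, this, (hM _).le]
      tauto
    · rcases lt_or_gt_of_ne (hab z h) with hy | hy
      · have hev := cont_ev hY.cont z isOpen_Iio hy
        have n3 : z ∉ TermPts (QS X Y M b) := by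
          rintro ⟨-, hf⟩
          apply hf
          filter_upwards [hev] with e he
          rw [not_not]
          exact ⟨(hM _).le, le_of_lt he.1⟩
        have n4 : z ∈ {z | X z = a ∧ Y z < b} := ⟨h, hy⟩
        rcases ha.dir hX h with hd | hd
        · have n1 : z ∈ TermPts (QS X Y a b) := by
            refine ⟨⟨h.le, hy.le⟩, Eventually.frequently ?_⟩
            filter_upwards [hd] with e he hq
            linarith [he.1, hq.1]
          have n2 : z ∉ TermPts (QS (fun z => - X z) Y (-a) b) := by
            rintro ⟨-, hf⟩
            apply hf
            filter_upwards [hd, hev] with e he he2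
            rw [not_not]
            exact ⟨neg_le_neg he.1.le, le_of_lt he2.1⟩
          tauto
        · have n1 : z ∈ TermPts (QS (fun z => - X z) Y (-a) b) := by
            refine ⟨⟨neg_le_neg h.ge, hy.le⟩, Eventually.frequently ?_⟩
            filter_upwards [hd] with e he hq
            have := hq.1
            simp only at this
            linarith [he.1]
          have n2 : z ∉ TermPts (QS X Y a b) := by
            rintro ⟨-, hf⟩
            apply hf
            filter_upwards [hd, hev] with e he he2
            rw [not_not]
            exact ⟨he.1.le, le_of_lt he2.1⟩
          tauto
      · have n : ∀ (X : Circ → ℝ) (a : ℝ), z ∉ TermPts (QS X Y a b) := fun X a hz => by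
          linarith [hz.1.2]
        have n1 := n X a
        have n2 := n (fun z => - X z) (-a)
        have n3 := n X M
        have n4 : z ∉ {z | X z = a ∧ Y z < b} := fun hz => by linarith [hz.2]
        tauto
    · have n1 : z ∉ TermPts (QS X Y a b) := fun hz => by
        linarith [hz.1.1]
      have n2 : z ∉ {z | X z = a ∧ Y z < b} := fun hz => h.ne' hz.1
      have n3 : z ∈ TermPts (QS (fun z => - X z) Y (-a) b) ↔ z ∈ TermPts (QS X Y M b) := by
        apply and_congr
        · simp [QS, h.le, (hM z).le]
        · apply frequently_congr
          filter_upwards [cont_ev hX.cont z isOpen_Ioi h] with e he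
          have : a ≤ X (z + (e : Circ)) := le_of_lt he.1
          simp [QS, this, (hM _).le]
      tauto
  rw [← ncard_union_eq (Set.disjoint_left.2 fun z h1 h2 => (key z).2.1 ⟨h1, h2⟩) f1 f2,
    ← ncard_union_eq (Set.disjoint_left.2 fun z h1 h2 => (key z).2.2 ⟨h1, h2⟩) f3 f4]
  congr 1
  ext z
  exact (key z).1

lemma nc_eq {F G : Circ → ℝ × ℝ} {X Y X' Y' : Circ → ℝ}
    (h : ∀ u v : ℝ × ℝ, u.1 < v.1 → u.2 < v.2 → persBetti F u v = persBetti G u v)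
    (eF : F = fun z => (X z, Y z)) (eG : G = fun z => (X' z, Y' z))
    (hX : C1R X) (hY : C1R Y) (hX' : C1R X') (hY' : C1R Y') {a b : ℝ}
    (ha : RV X a) (hb : RV Y b) (hab : ∀ z, X z = a → Y z ≠ b)
    (ha' : RV X' a) (hb' : RV Y' b) (hab' : ∀ z, X' z = a → Y' z ≠ b) :
    NC (QS X Y a b) = NC (QS X' Y' a b) := by
  obtain ⟨e, h1, h2, h3⟩ := ((pers_ev hX hY ha hb hab).and
    ((pers_ev hX' hY' ha' hb' hab').and self_mem_nhdsWithin)).exists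
  have h3 : 0 < e := h3
  have := h (a - e, b - e) (a, b) (by simpa using h3) (by simpa using h3)
  subst eF eG
  rw [← h1, ← h2]
  exact this

lemma ae_RV {φ : Circ → ℝ} (h : C1R φ) : ∀ᵐ a : ℝ, RV φ a := by
  have h0 : MeasureTheory.volume
      ((fun t : ℝ => φ (t : Circ)) '' {t | deriv (fun t : ℝ => φ (t : Circ)) t = 0}) = 0 := by
    apply MeasureTheory.addHaar_image_eq_zero_of_det_fderivWithin_eq_zero MeasureTheory.volume
      (f' := fun t => ContinuousLinearMap.toSpanSingleton ℝ (deriv (fun t : ℝ => φ (t : Circ)) t))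
    · intro t ht
      exact (h.hasDeriv t).hasFDerivAt.hasFDerivWithinAt
    · intro t ht
      have ht : deriv (fun t : ℝ => φ (t : Circ)) t = 0 := ht
      rw [ht]
      simp
  rw [MeasureTheory.ae_iff]
  refine MeasureTheory.measure_mono_null ?_ h0
  intro a ha
  have ha : ¬ RV φ a := ha
  simp only [RV, not_forall, not_not] at ha
  obtain ⟨t, h1, h2⟩ := ha
  exact ⟨t, h2, h1⟩

lemma C1R.bdd {φ : Circ → ℝ} (h : C1R φ) : ∃ M, ∀ z, φ z ≤ M := by
  obtain ⟨M, hM⟩ := (isCompact_range h.cont).bddAbove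
  exact ⟨M, fun z => hM ⟨z, rfl⟩⟩

lemma deriv_zero_of_max {φ : Circ → ℝ} {t : ℝ} (hm : ∀ z, φ z ≤ φ (t : Circ)) :
    deriv (fun t : ℝ => φ (t : Circ)) t = 0 := by
  apply IsLocalMax.deriv_eq_zero
  exact Filter.Eventually.of_forall fun s => hm _

def HB (F G : Circ → ℝ × ℝ) : Prop := ∀ s ∈ Sigma2, ∀ u v : ℝ × ℝ, u.1 < v.1 → u.2 < v.2 →
      persBetti (s ∘ F) u v = persBetti (s ∘ G) u v

lemma core_s5 {F G : Circ → ℝ × ℝ} {X Y X' Y' : Circ → ℝ} (h : HB F G)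
    (eF : F = fun z => (X z, Y z)) (eG : G = fun z => (X' z, Y' z))
    (hX : C1R X) (hY : C1R Y) (hX' : C1R X') (hY' : C1R Y') {a c : ℝ}
    (ha : RV X a) (ha' : RV X' a) {z₀ : Circ} (hz1 : X z₀ = a) (hz2 : Y z₀ = c)
    (hG : ∀ z, X' z = a → Y' z ≠ c) {w : Circ} (hw : c < Y w) : False := by
  obtain ⟨M1, hM1⟩ := hX.bdd
  obtain ⟨M2, hM2⟩ := hX'.bdd
  set M := max M1 M2 + 1 with hMdef
  have hM : ∀ z, X z < M := fun z => by linarith [hM1 z, le_max_left M1 M2]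
  have hM' : ∀ z, X' z < M := fun z => by linarith [hM2 z, le_max_right M1 M2]
  have hRM : RV X M := fun t ht => absurd ht (hM _).ne
  have hRM' : RV X' M := fun t ht => absurd ht (hM' _).ne
  have keyK : ∀ y, y < Y w → RV Y y → RV Y' y → (∀ z, X z = a → Y z ≠ y) →
      (∀ z, X' z = a → Y' z ≠ y) →
      {z | X z = a ∧ Y z < y}.ncard = {z | X' z = a ∧ Y' z < y}.ncard := by
    intro y hyw hy hy' hn hn'
    have n1 := nc_eq (h id (by simp [Sigma2])) (X := X) (Y := Y) (X' := X') (Y' := Y')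
      eF eG hX hY hX' hY' ha hy hn ha' hy' hn'
    have n2 := nc_eq (h (fun p => (-p.1, p.2)) (by simp [Sigma2])) (X := fun z => - X z) (Y := Y)
      (X' := fun z => - X' z) (Y' := Y') (by rw [eF]; rfl) (by rw [eG]; rfl)
      hX.neg hY hX'.neg hY' ha.neg hy (fun z hz => hn z (neg_injective hz)) ha'.neg hy'
      (fun z hz => hn' z (neg_injective hz))
    have n3 := nc_eq (h id (by simp [Sigma2])) (X := X) (Y := Y) (X' := X') (Y' := Y')
      eF eG hX hY hX' hY' hRM hy (fun z hz => absurd hz (hM z).ne) hRM' hy'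
      (fun z hz => absurd hz (hM' z).ne)
    have n4 := nc_eq (h (fun p => (p.1, -p.2)) (by simp [Sigma2])) (X := X)
      (Y := fun z => - Y z)
      (X' := X') (Y' := fun z => - Y' z) (by rw [eF]; rfl) (by rw [eG]; rfl)
      hX hY.neg hX' hY'.neg hRM hy.neg (fun z hz => absurd hz (hM z).ne) hRM' hy'.neg
      (fun z hz => absurd hz (hM' z).ne)
    have hw' : ∃ z, y < Y' z := by
      by_contra hcon
      push Not at hcon
      have hlt : ∀ z, Y' z < y := by
        intro z
        refine lt_of_le_of_ne (hcon z) fun hz => ?_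
        obtain ⟨t, -, rfl⟩ := coe_surj z 0
        exact hy' t hz (deriv_zero_of_max (by rw [hz]; exact hcon))
      have hemp : QS X' (fun z => - Y' z) M (-y) = ∅ := by
        ext z
        simp only [QS, mem_empty_iff_false, iff_false]
        intro hz
        have := hz.2
        linarith [hlt z]
      rw [hemp] at n4
      simp only [NC, image_empty, ncard_empty] at n4
      rw [ncard_eq_zero (comps_finite hX hY.neg hRM hy.neg), image_eq_empty] at n4
      have : w ∈ QS X (fun z => - Y z) M (-y) := ⟨(hM w).le, neg_le_neg hyw.le⟩
      rw [n4] at this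
      exact this
    have c1 := count hX hY ha hy hn hM ⟨w, hyw⟩
    have c2 := count hX' hY' ha' hy' hn' hM' hw'
    omega
  have fF := (ha.finite hX).image Y
  have fG := (ha'.finite hX').image Y'
  have hcG : c ∉ Y' '' {z | X' z = a} := by
    rintro ⟨z, hz, hzc⟩
    exact hG z hz hzc
  obtain ⟨d, hd, hball⟩ := Metric.isOpen_iff.1 fG.isClosed.isOpen_compl c hcG
  have hgap : ∀ z, X' z = a → ¬ |Y' z - c| < d := by
    intro z hz hlt
    exact hball (show Y' z ∈ Metric.ball c d by rwa [Metric.mem_ball, Real.dist_eq]) ⟨z, hz, rfl⟩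
  have hae : ∀ᵐ y : ℝ, RV Y y ∧ RV Y' y ∧ y ∉ Y '' {z | X z = a} := by
    have h3 : ∀ᵐ y : ℝ, y ∉ Y '' {z | X z = a} := by
      exact MeasureTheory.measure_eq_zero_iff_ae_notMem.1 (fF.measure_zero MeasureTheory.volume)
    filter_upwards [ae_RV hY, ae_RV hY', h3] with y a b c using ⟨a, b, c⟩
  have hdense := MeasureTheory.Measure.dense_of_ae hae
  obtain ⟨y1, ⟨r1, r1', r1''⟩, hy1⟩ := hdense.exists_between (show c - d < c by linarith)
  obtain ⟨y2, ⟨r2, r2', r2''⟩, hy2⟩ := hdense.exists_between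
    (show c < min (c + d) (Y w) from lt_min (by linarith) hw)
  have hy2a := lt_of_lt_of_le hy2.2 (min_le_left _ _)
  have hy2b := lt_of_lt_of_le hy2.2 (min_le_right _ _)
  have k1 := keyK y1 (by linarith [hy1.2]) r1 r1' (fun z hz hzy => r1'' ⟨z, hz, hzy⟩)
    (fun z hz hzy => hgap z hz (by rw [hzy, abs_lt]; constructor <;> linarith [hy1.1, hy1.2]))
  have k2 := keyK y2 hy2b r2 r2' (fun z hz hzy => r2'' ⟨z, hz, hzy⟩)
    (fun z hz hzy => hgap z hz (by rw [hzy, abs_lt]; constructor <;> linarith [hy2.1]))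
  have hGG : {z | X' z = a ∧ Y' z < y1} = {z | X' z = a ∧ Y' z < y2} := by
    ext z
    constructor
    · rintro ⟨p1, p2⟩
      exact ⟨p1, by linarith [hy1.2, hy2.1]⟩
    · rintro ⟨p1, p2⟩
      refine ⟨p1, ?_⟩
      by_contra hcon
      exact hgap z p1 (by rw [abs_lt]; constructor <;> linarith [hy1.1])
  have hFF : {z | X z = a ∧ Y z < y1}.ncard < {z | X z = a ∧ Y z < y2}.ncard := by
    apply ncard_lt_ncard
    · refine ⟨?_, fun hsub => ?_⟩
      · rintro z ⟨p1, p2⟩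
        exact ⟨p1, by linarith [hy1.2, hy2.1]⟩
      · have : z₀ ∈ {z | X z = a ∧ Y z < y1} := hsub ⟨hz1, by rw [hz2]; exact hy2.1⟩
        have := this.2
        linarith [hy1.2]
    · exact (ha.finite hX).subset fun z hz => hz.1
  rw [hGG] at k1
  omega

lemma HB.refl2 {F G : Circ → ℝ × ℝ} (h : HB F G) :
    HB (fun z => ((F z).1, -(F z).2)) (fun z => ((G z).1, -(G z).2)) := by
  intro s hs
  simp only [Sigma2, mem_insert_iff, mem_singleton_iff] at hs
  rcases hs with rfl | rfl | rfl | rfl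
  · exact h (fun p => (p.1, -p.2)) (by simp [Sigma2])
  · exact h (fun p => (-p.1, -p.2)) (by simp [Sigma2])
  · have := h id (by simp [Sigma2])
    simpa [Function.comp_def] using this
  · have := h (fun p => (-p.1, p.2)) (by simp [Sigma2])
    simpa [Function.comp_def] using this

lemma persBetti_swap (F : Circ → ℝ × ℝ) (u v : ℝ × ℝ) :
    persBetti (fun z => (F z).swap) u v = persBetti F u.swap v.swap := by
  have : ∀ u : ℝ × ℝ, (fun z => (F z).swap) ⁻¹' Dset u = F ⁻¹' Dset u.swap := by
    intro u
    ext z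
    simp [Dset, and_comm]
  simp only [persBetti, this]

lemma HB.swap {F G : Circ → ℝ × ℝ} (h : HB F G) :
    HB (fun z => (F z).swap) (fun z => (G z).swap) := by
  intro s hs u v h1 h2
  obtain ⟨s', hs', e⟩ : ∃ s' ∈ Sigma2, ∀ p, s p.swap = (s' p).swap := by
    simp only [Sigma2, mem_insert_iff, mem_singleton_iff] at hs
    rcases hs with rfl | rfl | rfl | rfl
    · exact ⟨id, by simp [Sigma2], fun p => rfl⟩
    · exact ⟨fun p => (p.1, -p.2), by simp [Sigma2], fun p => rfl⟩
    · exact ⟨fun p => (-p.1, p.2), by simp [Sigma2], fun p => rfl⟩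
    · exact ⟨fun p => (-p.1, -p.2), by simp [Sigma2], fun p => rfl⟩
  have := h s' hs' u.swap v.swap h2 h1
  rw [← persBetti_swap, ← persBetti_swap] at this
  simpa only [Function.comp_def, e] using this

lemma stepA {F G : Circ → ℝ × ℝ} {X Y X' Y' : Circ → ℝ} (h : HB F G)
    (eF : F = fun z => (X z, Y z)) (eG : G = fun z => (X' z, Y' z))
    (hX : C1R X) (hY : C1R Y) (hX' : C1R X') (hY' : C1R Y')
    (himm : ∀ t, deriv (fun t : ℝ => X (t : Circ)) t = 0 →
      deriv (fun t : ℝ => Y (t : Circ)) t ≠ 0) {t₀ : ℝ}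
    (ht : deriv (fun t : ℝ => X (t : Circ)) t₀ ≠ 0) (hG : F (t₀ : Circ) ∉ range G) : False := by
  have cF : Continuous F := by rw [eF]; exact hX.cont.prodMk hY.cont
  have cG : Continuous G := by rw [eG]; exact hX'.cont.prodMk hY'.cont
  have hU : IsOpen {t : ℝ | F (t : Circ) ∉ range G} :=
    (isCompact_range cG).isClosed.isOpen_compl.preimage (cF.comp coe_cont)
  have hs : HasStrictDerivAt (fun t : ℝ => X (t : Circ)) _ t₀ :=
    (ContDiff.contDiffAt hX).hasStrictDerivAt (by norm_num)
  have hmap := hs.map_nhds_eq ht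
  have him : (fun t : ℝ => X (t : Circ)) '' {t : ℝ | F (t : Circ) ∉ range G} ∈ 𝓝 (X (t₀ : Circ)) := by
    rw [← hmap]
    exact image_mem_map (hU.mem_nhds hG)
  have hae : ∀ᵐ a : ℝ, RV X a ∧ RV X' a := by
    filter_upwards [ae_RV hX, ae_RV hX'] with a p q using ⟨p, q⟩
  have hdense := MeasureTheory.Measure.dense_of_ae hae
  obtain ⟨a, ⟨ra, ra'⟩, t, htU, hta⟩ := hdense.inter_nhds_nonempty him
  have htU : F (t : Circ) ∉ range G := htU
  have hta : X (t : Circ) = a := hta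
  have hmiss : ∀ z, X' z = a → Y' z ≠ Y (t : Circ) := by
    intro z h1 h2
    apply htU
    refine ⟨z, ?_⟩
    rw [eF, eG]
    simp [h1, h2, hta]
  by_cases hup : ∃ w, Y (t : Circ) < Y w
  · obtain ⟨w, hw⟩ := hup
    exact core_s5 h eF eG hX hY hX' hY' ra ra' hta rfl hmiss hw
  by_cases hdn : ∃ w, Y w < Y (t : Circ)
  · obtain ⟨w, hw⟩ := hdn
    refine core_s5 h.refl2 (X := X) (Y := fun z => - Y z) (X' := X') (Y' := fun z => - Y' z)
      (by rw [eF]) (by rw [eG]) hX hY.neg hX' hY'.neg ra ra' hta rfl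
      (fun z h1 h2 => hmiss z h1 (neg_injective h2)) (w := w) (neg_lt_neg hw)
  push Not at hup hdn
  have hconst : ∀ z w, Y z ≤ Y w := fun z w => (hup z).trans (hdn w)
  obtain ⟨z, -, hz⟩ := isCompact_univ.exists_isMaxOn univ_nonempty hX.cont.continuousOn
  obtain ⟨s, -, rfl⟩ := coe_surj z 0
  exact himm s (deriv_zero_of_max fun w => hz (mem_univ w))
    (deriv_zero_of_max fun w => hconst _ _)

lemma range_sub {F G : Circ → ℝ × ℝ} (h : HB F G) (hF : IsC1 F) (hG : IsC1 G)
    (himm : ∀ t : ℝ, deriv (liftOf F) t ≠ 0) : range F ⊆ range G := by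
  rintro _ ⟨z, rfl⟩
  by_contra hcon
  obtain ⟨t, -, rfl⟩ := coe_surj z 0
  have hX : C1R (fun z => (F z).1) := ContDiff.fst hF
  have hY : C1R (fun z => (F z).2) := ContDiff.snd hF
  have hX' : C1R (fun z => (G z).1) := ContDiff.fst hG
  have hY' : C1R (fun z => (G z).2) := ContDiff.snd hG
  have hd : ∀ t : ℝ, ¬ (deriv (fun t : ℝ => (F (t : Circ)).1) t = 0 ∧
      deriv (fun t : ℝ => (F (t : Circ)).2) t = 0) := by
    rintro t ⟨h1, h2⟩
    apply himm t
    have a1 := hX.hasDeriv t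
    have a2 := hY.hasDeriv t
    have := (a1.prodMk a2).deriv
    rw [h1, h2] at this
    exact this
  by_cases h0 : deriv (fun t : ℝ => (F (t : Circ)).1) t = 0
  · have h1 : deriv (fun t : ℝ => (F (t : Circ)).2) t ≠ 0 := fun h1 => hd t ⟨h0, h1⟩
    refine stepA h.swap (X := fun z => (F z).2) (Y := fun z => (F z).1) (X' := fun z => (G z).2)
      (Y' := fun z => (G z).1) rfl rfl hY hX hY' hX' (fun t p q => hd t ⟨q, p⟩) h1 ?_
    rintro ⟨w, hw⟩
    exact hcon ⟨w, Prod.swap_injective hw⟩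
  · exact stepA h (X := fun z => (F z).1) (Y := fun z => (F z).2) (X' := fun z => (G z).1)
      (Y' := fun z => (G z).2) rfl rfl hX hY hX' hY' (fun t p q => hd t ⟨p, q⟩) h0 hcon

/-- If two generic functions, composed with every element of the reflection group `Σ₂`,
have the same persistent Betti numbers on all of `Δ⁺`, then their images coincide. -/
theorem image_eq_of_persBetti_eq (F G : Circ → ℝ × ℝ)
    (hF : Generic F) (hG : Generic G)
    (h : ∀ s ∈ Sigma2, ∀ u v : ℝ × ℝ, u.1 < v.1 → u.2 < v.2 →
      persBetti (s ∘ F) u v = persBetti (s ∘ G) u v) :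
    Set.range F = Set.range G := by
  exact Subset.antisymm (range_sub h hF.1 hG.1 hF.2.1)
    (range_sub (fun s hs u v h1 h2 => (h s hs u v h1 h2).symm) hG.1 hF.1 hG.2.1)
end
end

section
/- Let f, g: S^1 → ℝ^2 be generic functions. If H_0^{u,v}(s∘f) = H_0^{u,v}(s∘g) for every (u,v) ∈ Δ^+ and every s ∈ Σ_2, then there exists a C^1-diffeomorphism h: S^1 → S^1 such that g∘h = f. -/
open Set Real Filter Topology

noncomputable section

def compsN (F : Circ → ℝ × ℝ) (u v : ℝ × ℝ) : Set (Set Circ) :=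
  (fun x => connectedComponentIn (F ⁻¹' Dset v) x) '' (F ⁻¹' Dset u)

lemma Dset_mono {u v : ℝ × ℝ} (h1 : u.1 ≤ v.1) (h2 : u.2 ≤ v.2) : Dset u ⊆ Dset v :=
  fun _ hw => ⟨hw.1.trans h1, hw.2.trans h2⟩

lemma isClosed_Dset (u : ℝ × ℝ) : IsClosed (Dset u) :=
  (isClosed_le continuous_fst continuous_const).inter
    (isClosed_le continuous_snd continuous_const)

lemma compsN_finite (F : Circ → ℝ × ℝ) (hF : Continuous F) (u v : ℝ × ℝ)
    (h1 : u.1 < v.1) (h2 : u.2 < v.2) : (compsN F u v).Finite := by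
  have : Fact (0 < 2 * π) := ⟨by positivity⟩
  have : LocallyPathConnectedSpace Circ :=
    inferInstanceAs (LocallyPathConnectedSpace (Quotient _))
  have hK : IsCompact (F ⁻¹' Dset u) := ((isClosed_Dset u).preimage hF).isCompact
  have hO : IsOpen (F ⁻¹' {w | w.1 < v.1 ∧ w.2 < v.2}) :=
    ((isOpen_lt continuous_fst continuous_const).inter
      (isOpen_lt continuous_snd continuous_const)).preimage hF
  have hsub : F ⁻¹' {w | w.1 < v.1 ∧ w.2 < v.2} ⊆ F ⁻¹' Dset v :=
    fun x hx => ⟨hx.1.le, hx.2.le⟩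
  obtain ⟨t, ht, htc⟩ := hK.elim_nhds_subcover
    (fun x => connectedComponentIn (F ⁻¹' {w | w.1 < v.1 ∧ w.2 < v.2}) x) (fun x hx =>
      hO.connectedComponentIn.mem_nhds (mem_connectedComponentIn
        ⟨lt_of_le_of_lt hx.1 h1, lt_of_le_of_lt hx.2 h2⟩))
  refine (t.finite_toSet.image (fun x => connectedComponentIn (F ⁻¹' Dset v) x)).subset ?_
  rintro _ ⟨x, hx, rfl⟩
  obtain ⟨y, hy, hxy⟩ := mem_iUnion₂.1 (htc hx)
  exact ⟨y, hy, connectedComponentIn_eq (connectedComponentIn_mono _ hsub hxy)⟩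

lemma mem_compsN_of {F : Circ → ℝ × ℝ} {u v : ℝ × ℝ} {x z : Circ}
    (hz : z ∈ connectedComponentIn (F ⁻¹' Dset v) x) (hzu : F z ∈ Dset u) :
    connectedComponentIn (F ⁻¹' Dset v) x ∈ compsN F u v :=
  ⟨z, hzu, (connectedComponentIn_eq hz).symm⟩

lemma exists_mem_compsN {F : Circ → ℝ × ℝ} {u v : ℝ × ℝ} (h1 : u.1 ≤ v.1) (h2 : u.2 ≤ v.2)
    {K : Set Circ} (hK : K ∈ compsN F u v) : ∃ z ∈ K, F z ∈ Dset u := by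
  obtain ⟨z, hz, rfl⟩ := hK
  exact ⟨z, mem_connectedComponentIn (Dset_mono h1 h2 hz), hz⟩

/-- crossing lemma -/
lemma cross_square (F : Circ → ℝ × ℝ) (hF : Continuous F) (a b c d e f : ℝ)
    (hac : a < c) (hbd : b < d) (hce : c < e) (hdf : d < f) (K : Set Circ)
    (hA : K ∈ compsN F (a, d) (e, f)) (hB : K ∈ compsN F (c, b) (e, f))
    (hC : K ∉ compsN F (a, b) (e, f)) :
    ∃ z ∈ K, a < (F z).1 ∧ b < (F z).2 ∧ (F z) ∈ Dset (e, f) := by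
  by_contra hcon
  push Not at hcon
  obtain ⟨x, hx, hxA⟩ := exists_mem_compsN (by simp; linarith) (by simp; linarith) hA
  obtain ⟨y, hy, hyB⟩ := exists_mem_compsN (by simp; linarith) (by simp; linarith) hB
  obtain ⟨z, hz, rfl⟩ := hA
  have hno : ∀ w ∈ connectedComponentIn (F ⁻¹' Dset (e, f)) z, ¬ ((F w).1 ≤ a ∧ (F w).2 ≤ b) :=
    fun w hw hh => hC (mem_compsN_of hw hh)
  have hsub := connectedComponentIn_subset (F ⁻¹' Dset (e, f)) z
  have hp : IsPreconnected (connectedComponentIn (F ⁻¹' Dset (e, f)) z) :=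
    isPreconnected_connectedComponentIn
  have c1 : Continuous fun w => (F w).1 := continuous_fst.comp hF
  have c2 : Continuous fun w => (F w).2 := continuous_snd.comp hF
  have := isPreconnected_closed_iff.1 hp {w | (F w).1 ≤ a} {w | (F w).2 ≤ b}
    (isClosed_le c1 continuous_const) (isClosed_le c2 continuous_const)
    (fun w hw => by
      by_contra hw'
      simp only [mem_union, mem_ofPred_eq, not_or, not_le] at hw'
      exact hcon w hw hw'.1 hw'.2 (hsub hw))
    ⟨x, hx, hxA.1⟩ ⟨y, hy, hyB.2⟩
  obtain ⟨w, hw, hw1, hw2⟩ := this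
  exact hno w hw ⟨hw1, hw2⟩

lemma count_avoid (F : Circ → ℝ × ℝ) (hF : Continuous F) (a b c d e f : ℝ)
    (hac : a < c) (hbd : b < d) (hce : c < e) (hdf : d < f)
    (hQ : ∀ z, a < (F z).1 → b < (F z).2 → F z ∈ Dset (e, f) → False) :
    persBetti F (c, d) (e, f) + persBetti F (a, b) (e, f)
      = persBetti F (a, d) (e, f) + persBetti F (c, b) (e, f) := by
  change (compsN F _ _).ncard + (compsN F _ _).ncard
    = (compsN F _ _).ncard + (compsN F _ _).ncard
  have h1 : compsN F (c, d) (e, f) = compsN F (a, d) (e, f) ∪ compsN F (c, b) (e, f) := by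
    apply subset_antisymm
    · rintro _ ⟨z, hz, rfl⟩
      rcases le_or_gt (F z).1 a with h | h
      · exact Or.inl ⟨z, ⟨h, hz.2⟩, rfl⟩
      rcases le_or_gt (F z).2 b with h' | h'
      · exact Or.inr ⟨z, ⟨hz.1, h'⟩, rfl⟩
      · exact (hQ z h h' ⟨hz.1.trans hce.le, hz.2.trans hdf.le⟩).elim
    · apply union_subset
      · exact image_mono (preimage_mono (Dset_mono hac.le le_rfl))
      · exact image_mono (preimage_mono (Dset_mono le_rfl hbd.le))
  have h2 : compsN F (a, b) (e, f) = compsN F (a, d) (e, f) ∩ compsN F (c, b) (e, f) := by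
    apply subset_antisymm
    · apply subset_inter
      · exact image_mono (preimage_mono (Dset_mono le_rfl hbd.le))
      · exact image_mono (preimage_mono (Dset_mono hac.le le_rfl))
    · rintro K ⟨hA, hB⟩
      by_contra hC
      obtain ⟨z, -, hz1, hz2, hz3⟩ := cross_square F hF a b c d e f hac hbd hce hdf K hA hB hC
      exact hQ z hz1 hz2 hz3
  rw [h1, h2]
  exact ncard_union_add_ncard_inter _ _ (compsN_finite F hF _ _ (hac.trans hce) hdf)
    (compsN_finite F hF _ _ hce (hbd.trans hdf))

lemma count_hit (F : Circ → ℝ × ℝ) (hF : Continuous F) (a b c d e f : ℝ)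
    (hac : a < c) (hbd : b < d) (hce : c < e) (hdf : d < f) (x : Circ) (hx : F x = (c, d))
    (hQ : ∀ z, a < (F z).1 → b < (F z).2 → F z ∈ Dset (e, f) →
      z ∈ connectedComponentIn (F ⁻¹' Dset (e, f)) x)
    (hA : ∀ z ∈ connectedComponentIn (F ⁻¹' Dset (e, f)) x, F z ∉ Dset (a, d))
    (hB : ∀ z ∈ connectedComponentIn (F ⁻¹' Dset (e, f)) x, F z ∉ Dset (c, b)) :
    persBetti F (c, d) (e, f) + persBetti F (a, b) (e, f)
      = persBetti F (a, d) (e, f) + persBetti F (c, b) (e, f) + 1 := by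
  change (compsN F _ _).ncard + (compsN F _ _).ncard
    = (compsN F _ _).ncard + (compsN F _ _).ncard + 1
  set K := connectedComponentIn (F ⁻¹' Dset (e, f)) x with hK
  have hKA : K ∉ compsN F (a, d) (e, f) := fun h => by
    obtain ⟨z, hz, hz'⟩ := exists_mem_compsN (hac.trans hce).le hdf.le h
    exact hA z hz hz'
  have hKB : K ∉ compsN F (c, b) (e, f) := fun h => by
    obtain ⟨z, hz, hz'⟩ := exists_mem_compsN hce.le (hbd.trans hdf).le h
    exact hB z hz hz'
  have h1 : compsN F (c, d) (e, f) =
      insert K (compsN F (a, d) (e, f) ∪ compsN F (c, b) (e, f)) := by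
    apply subset_antisymm
    · rintro _ ⟨z, hz, rfl⟩
      rcases le_or_gt (F z).1 a with h | h
      · exact Or.inr (Or.inl ⟨z, ⟨h, hz.2⟩, rfl⟩)
      rcases le_or_gt (F z).2 b with h' | h'
      · exact Or.inr (Or.inr ⟨z, ⟨hz.1, h'⟩, rfl⟩)
      · exact Or.inl (connectedComponentIn_eq
          (hQ z h h' ⟨hz.1.trans hce.le, hz.2.trans hdf.le⟩)).symm
    · apply insert_subset
      · refine ⟨x, ?_, rfl⟩
        rw [mem_preimage, hx]; exact ⟨le_rfl, le_rfl⟩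
      apply union_subset
      · exact image_mono (preimage_mono (Dset_mono hac.le le_rfl))
      · exact image_mono (preimage_mono (Dset_mono le_rfl hbd.le))
  have h2 : compsN F (a, b) (e, f) = compsN F (a, d) (e, f) ∩ compsN F (c, b) (e, f) := by
    apply subset_antisymm
    · apply subset_inter
      · exact image_mono (preimage_mono (Dset_mono le_rfl hbd.le))
      · exact image_mono (preimage_mono (Dset_mono hac.le le_rfl))
    · rintro L ⟨hA, hB⟩
      by_contra hC
      obtain ⟨z, hzL, hz1, hz2, hz3⟩ := cross_square F hF a b c d e f hac hbd hce hdf L hA hB hC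
      have : L = K := by
        obtain ⟨y, hy, rfl⟩ := hA
        exact (connectedComponentIn_eq hzL).trans (connectedComponentIn_eq (hQ z hz1 hz2 hz3)).symm
      exact hKA (this ▸ hA)
  have f1 := compsN_finite F hF (a, d) (e, f) (hac.trans hce) hdf
  have f2 := compsN_finite F hF (c, b) (e, f) hce (hbd.trans hdf)
  rw [h1, h2, ncard_insert_of_notMem (by rintro (h | h); exacts [hKA h, hKB h]) (f1.union f2),
    add_right_comm]
  rw [ncard_union_add_ncard_inter _ _ f1 f2]

lemma corner (F G : Circ → ℝ × ℝ) (hF : Continuous F) (hG : Continuous G) (t₀ η : ℝ)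
    (hη : 0 < η)
    (hm : StrictMonoOn (fun t : ℝ => (F (t : Circ)).1) (Icc (t₀ - η) (t₀ + η)))
    (ha : StrictAntiOn (fun t : ℝ => (F (t : Circ)).2) (Icc (t₀ - η) (t₀ + η)))
    (hs : ∀ z, F z = F (t₀ : Circ) → z = (t₀ : Circ))
    (hGF : ∀ z, G z ≠ F (t₀ : Circ)) :
    ∃ u v : ℝ × ℝ, u.1 < v.1 ∧ u.2 < v.2 ∧ persBetti F u v ≠ persBetti G u v := by
  have : Fact (0 < 2 * π) := ⟨by positivity⟩
  set W : Set Circ := (fun t : ℝ => (t : Circ)) '' Ioo (t₀ - η) (t₀ + η) with hW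
  have hWo : IsOpen W := QuotientAddGroup.isOpenMap_coe _ isOpen_Ioo
  have ht₀ : t₀ ∈ Icc (t₀ - η) (t₀ + η) := ⟨by linarith, by linarith⟩
  have hl : t₀ - η ∈ Icc (t₀ - η) (t₀ + η) := ⟨by linarith, by linarith⟩
  have hr : t₀ + η ∈ Icc (t₀ - η) (t₀ + η) := ⟨by linarith, by linarith⟩
  have e1 : ∃ r > 0, ∀ z, dist (F z) (F t₀) ≤ r → z ∈ W := by
    have hc : IsClosed (F '' Wᶜ) := (hWo.isClosed_compl.isCompact.image hF).isClosed
    have hn : F t₀ ∈ (F '' Wᶜ)ᶜ := by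
      rintro ⟨z, hz, hz'⟩
      exact hz (hs z hz' ▸ ⟨t₀, ⟨by linarith, by linarith⟩, rfl⟩)
    obtain ⟨r, hr, hr'⟩ := Metric.nhds_basis_closedBall.mem_iff.1 (hc.isOpen_compl.mem_nhds hn)
    refine ⟨r, hr, fun z hz => ?_⟩
    by_contra hzW
    exact hr' (Metric.mem_closedBall.2 hz) ⟨z, hzW, rfl⟩
  have e2 : ∃ r > 0, ∀ z, ¬ dist (G z) (F t₀) ≤ r := by
    have hc : IsClosed (range G) := (isCompact_range hG).isClosed
    have hn : F t₀ ∈ (range G)ᶜ := by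
      rintro ⟨z, hz⟩
      exact hGF z hz
    obtain ⟨r, hr, hr'⟩ := Metric.nhds_basis_closedBall.mem_iff.1 (hc.isOpen_compl.mem_nhds hn)
    exact ⟨r, hr, fun z hz => hr' (Metric.mem_closedBall.2 hz) ⟨z, rfl⟩⟩
  obtain ⟨r1, hr1, hr1'⟩ := e1
  obtain ⟨r2, hr2, hr2'⟩ := e2
  have hm' : (F t₀).1 < (F ((t₀ + η : ℝ) : Circ)).1 := hm ht₀ hr (by linarith)
  have ha' : (F t₀).2 < (F ((t₀ - η : ℝ) : Circ)).2 := ha hl ht₀ (by linarith)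
  obtain ⟨r, hr0, hrr⟩ : ∃ r > 0, r < min (min r1 r2) (min ((F ((t₀ + η : ℝ) : Circ)).1 - (F t₀).1)
      ((F ((t₀ - η : ℝ) : Circ)).2 - (F t₀).2)) := by
    apply exists_between
    simp only [lt_min_iff, sub_pos]
    exact ⟨⟨hr1, hr2⟩, hm', ha'⟩
  simp only [lt_min_iff] at hrr
  obtain ⟨⟨hrr1, hrr2⟩, hrm, hra⟩ := hrr
  obtain ⟨c, hc⟩ : ∃ c, c = (F t₀).1 := ⟨_, rfl⟩
  obtain ⟨d, hd⟩ : ∃ d, d = (F t₀).2 := ⟨_, rfl⟩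
  have hcd : F t₀ = (c, d) := by rw [hc, hd]
  rw [← hc] at hrm hm'
  rw [← hd] at hra ha'
  rw [hcd] at hr1' hr2'
  have hsq : ∀ w : ℝ × ℝ, c - r < w.1 → d - r < w.2 → w ∈ Dset (c + r, d + r) →
      dist w (c, d) ≤ r := by
    intro w h1 h2 h3
    rw [Prod.dist_eq, max_le_iff, Real.dist_eq, Real.dist_eq, abs_le, abs_le]
    have := h3.1
    have := h3.2
    simp only at *
    refine ⟨⟨?_, ?_⟩, ?_, ?_⟩ <;> linarith
  have hGc := count_avoid G hG (c - r) (d - r) c d (c + r) (d + r) (by linarith) (by linarith)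
    (by linarith) (by linarith) (fun z h1 h2 h3 => hr2' z ((hsq _ h1 h2 h3).trans hrr2.le))
  -- local set
  set L : Set ℝ := {t | t ∈ Icc (t₀ - η) (t₀ + η) ∧ F (t : Circ) ∈ Dset (c + r, d + r)} with hL
  have hcont : Continuous fun t : ℝ => F (t : Circ) := hF.comp (AddCircle.continuous_mk' _)
  have hLcl : IsCompact L :=
    isCompact_Icc.inter_right ((isClosed_Dset _).preimage hcont)
  have hLord : L.OrdConnected := by
    constructor
    rintro s ⟨hs, hs'⟩ t ⟨ht, ht'⟩ w hw
    have hwI : w ∈ Icc (t₀ - η) (t₀ + η) := ⟨hs.1.trans hw.1, hw.2.trans ht.2⟩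
    exact ⟨hwI, (hm.monotoneOn hwI ht hw.2).trans ht'.1, (ha.antitoneOn hs hwI hw.1).trans hs'.2⟩
  have hLt₀ : t₀ ∈ L := ⟨ht₀, by rw [hcd]; constructor <;> simp <;> linarith⟩
  have hLW : L ⊆ Ioo (t₀ - η) (t₀ + η) := by
    rintro t ⟨ht, h1, h2⟩
    refine ⟨lt_of_le_of_ne ht.1 ?_, lt_of_le_of_ne ht.2 ?_⟩
    · rintro rfl; simp only at h2; linarith
    · rintro rfl; simp only at h1; linarith
  set PL : Set Circ := (fun t : ℝ => (t : Circ)) '' L with hPL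
  have hPLpre : IsPreconnected PL :=
    hLord.isPreconnected.image _ (AddCircle.continuous_mk' _).continuousOn
  have hPLcl : IsClosed PL := (hLcl.image (AddCircle.continuous_mk' _)).isClosed
  have hWPL : ∀ z ∈ W, F z ∈ Dset (c + r, d + r) → z ∈ PL := by
    rintro _ ⟨t, ht, rfl⟩ hz
    exact ⟨t, ⟨⟨ht.1.le, ht.2.le⟩, hz⟩, rfl⟩
  have hxD : (t₀ : Circ) ∈ F ⁻¹' Dset (c + r, d + r) := hLt₀.2
  have hsub1 : PL ⊆ connectedComponentIn (F ⁻¹' Dset (c + r, d + r)) t₀ := by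
    apply hPLpre.subset_connectedComponentIn ⟨t₀, hLt₀, rfl⟩
    rintro _ ⟨t, ht, rfl⟩
    exact ht.2
  have hsub2 : connectedComponentIn (F ⁻¹' Dset (c + r, d + r)) t₀ ⊆ PL := by
    have hsub := connectedComponentIn_subset (F ⁻¹' Dset (c + r, d + r)) t₀
    have := isPreconnected_iff_subset_of_disjoint.1
      (isPreconnected_connectedComponentIn (F := F ⁻¹' Dset (c + r, d + r)) (x := (t₀ : Circ)))
      W PLᶜ hWo hPLcl.isOpen_compl (fun z _ => by
        by_cases hz : z ∈ PL
        · left; exact image_mono hLW hz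
        · right; exact hz) (by
        ext z
        simp only [mem_inter_iff, mem_empty_iff_false, iff_false]
        rintro ⟨h1, h2, h3⟩
        exact h3 (hWPL z h2 (hsub h1)))
    rcases this with h | h
    · exact fun z hz => hWPL z (h hz) (hsub hz)
    · exact (h (mem_connectedComponentIn hxD) ⟨t₀, hLt₀, rfl⟩).elim
  have hFc := count_hit F hF (c - r) (d - r) c d (c + r) (d + r) (by linarith) (by linarith)
    (by linarith) (by linarith) t₀ hcd
    (fun z h1 h2 h3 => hsub1 (hWPL z (hr1' z ((hsq _ h1 h2 h3).trans hrr1.le)) h3))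
    (by
      intro z hz hz'
      obtain ⟨t, ht, rfl⟩ := hsub2 hz
      rcases lt_or_ge t t₀ with h | h
      · have := ha ht.1 ht₀ h
        have := hz'.2
        simp only at *; linarith
      · have := hm.monotoneOn ht₀ ht.1 h
        have := hz'.1
        simp only at *; linarith)
    (by
      intro z hz hz'
      obtain ⟨t, ht, rfl⟩ := hsub2 hz
      rcases le_or_gt t t₀ with h | h
      · have := ha.antitoneOn ht.1 ht₀ h
        have := hz'.2
        simp only at *; linarith
      · have := hm ht₀ ht.1 h
        have := hz'.1
        simp only at *; linarith)
  by_contra hcon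
  push Not at hcon
  have a1 := hcon (c, d) (c + r, d + r) (by simp; linarith) (by simp; linarith)
  have a2 := hcon (c - r, d - r) (c + r, d + r) (by simp; linarith) (by simp; linarith)
  have a3 := hcon (c - r, d) (c + r, d + r) (by simp; linarith) (by simp; linarith)
  have a4 := hcon (c, d - r) (c + r, d + r) (by simp; linarith) (by simp; linarith)
  omega

structure Curve (g : ℝ → ℝ × ℝ) : Prop where
  c1 : ContDiff ℝ 1 g
  ne : ∀ t, deriv g t ≠ 0
  per : ∀ t, ∀ n : ℤ, g (t + n * (2 * π)) = g t
  clean : ∀ t s, g t = g s → cross (deriv g t) (deriv g s) = 0 → ∃ n : ℤ, t = s + n * (2 * π)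

lemma coe_eq_iff (t s : ℝ) : (t : Circ) = (s : Circ) ↔ ∃ n : ℤ, t = s + n * (2 * π) := by
  rw [← sub_eq_zero, ← AddCircle.coe_sub, AddCircle.coe_eq_zero_iff]
  refine exists_congr fun n => ?_
  rw [zsmul_eq_mul]
  constructor <;> intro h <;> linarith

lemma hasDeriv_fst {g : ℝ → ℝ × ℝ} {a : ℝ × ℝ} {t : ℝ} (h : HasDerivAt g a t) :
    HasDerivAt (fun t => (g t).1) a.1 t :=
  (ContinuousLinearMap.fst ℝ ℝ ℝ).hasFDerivAt.comp_hasDerivAt t h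

lemma hasDeriv_snd {g : ℝ → ℝ × ℝ} {a : ℝ × ℝ} {t : ℝ} (h : HasDerivAt g a t) :
    HasDerivAt (fun t => (g t).2) a.2 t :=
  (ContinuousLinearMap.snd ℝ ℝ ℝ).hasFDerivAt.comp_hasDerivAt t h

lemma span_eq_of_cross (a b : ℝ × ℝ) (ha : a ≠ 0) (hb : b ≠ 0) (h : cross a b = 0) :
    Submodule.span ℝ {a} = Submodule.span ℝ {b} := by
  obtain ⟨a1, a2⟩ := a
  obtain ⟨b1, b2⟩ := b
  simp only [cross] at h
  rw [Submodule.span_singleton_eq_span_singleton]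
  have hz : ∃ z : ℝ, z • (a1, a2) = (b1, b2) := by
    by_cases h1 : a1 = 0
    · have h2 : a2 ≠ 0 := fun h2 => ha (by simp [h1, h2])
      refine ⟨b2 / a2, ?_⟩
      have hb1 : b1 = 0 := by
        have : a2 * b1 = 0 := by rw [h1] at h; linarith
        exact (mul_eq_zero.1 this).resolve_left h2
      ext <;> simp [h1, hb1, h2]
    · refine ⟨b1 / a1, ?_⟩
      ext
      · simp [h1]
      · simp; field_simp; linarith
  obtain ⟨z, hz⟩ := hz
  have : z ≠ 0 := by
    rintro rfl
    exact hb (by rw [← hz, zero_smul])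
  exact ⟨Units.mk0 z this, hz⟩

lemma curve_of_generic {F : Circ → ℝ × ℝ} (hF : Generic F) : Curve (liftOf F) where
  c1 := hF.1
  ne := hF.2.1
  per t n := by
    unfold liftOf
    congr 1
    rw [coe_eq_iff]
    exact ⟨n, rfl⟩
  clean t s h1 h2 := by
    rw [← coe_eq_iff]
    exact hF.2.2.2.2 t s h1 (span_eq_of_cross _ _ (hF.2.1 _) (hF.2.1 _) h2)

lemma continuous_of_generic {F : Circ → ℝ × ℝ} (hF : Generic F) : Continuous F := by
  have h : Continuous (liftOf F) := hF.1.continuous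
  exact continuous_coinduced_dom.2 h

lemma Curve.hasDeriv {g : ℝ → ℝ × ℝ} (hg : Curve g) (t : ℝ) : HasDerivAt g (deriv g t) t :=
  (hg.c1.differentiable one_ne_zero t).hasDerivAt

lemma Curve.contDeriv {g : ℝ → ℝ × ℝ} (hg : Curve g) : Continuous (deriv g) :=
  hg.c1.continuous_deriv le_rfl

lemma range_sub_s6 (F G : Circ → ℝ × ℝ) (hF : Generic F) (hG : Generic G)
    (h : ∀ s ∈ Sigma2, ∀ u v : ℝ × ℝ, u.1 < v.1 → u.2 < v.2 →
      persBetti (s ∘ F) u v = persBetti (s ∘ G) u v) (t₀ : ℝ)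
    (h1 : (deriv (liftOf F) t₀).1 ≠ 0) (h2 : (deriv (liftOf F) t₀).2 ≠ 0) :
    ∃ s, liftOf F t₀ = liftOf G s := by
  by_contra hcon
  push Not at hcon
  have hf := curve_of_generic hF
  have hFc := continuous_of_generic hF
  have hGc := continuous_of_generic hG
  have : Fact (0 < 2 * π) := ⟨by positivity⟩
  have cd1 : Continuous fun t => (deriv (liftOf F) t).1 := continuous_fst.comp hf.contDeriv
  have cd2 : Continuous fun t => (deriv (liftOf F) t).2 := continuous_snd.comp hf.contDeriv
  have hB : IsClosed (range G) := (isCompact_range hGc).isClosed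
  have ev : ∀ᶠ t in 𝓝 t₀, (deriv (liftOf F) t).1 ≠ 0 ∧ (deriv (liftOf F) t).2 ≠ 0 ∧
      liftOf F t ∈ (range G)ᶜ := by
    refine (cd1.continuousAt.eventually_ne h1).and ((cd2.continuousAt.eventually_ne h2).and ?_)
    refine hf.c1.continuous.continuousAt.eventually (hB.isOpen_compl.mem_nhds ?_)
    rintro ⟨z, hz⟩
    obtain ⟨s, rfl⟩ := QuotientAddGroup.mk_surjective z
    exact hcon s hz.symm
  -- simple points are dense
  set M : Set Circ := {x | ∃ y, x ≠ y ∧ F x = F y} with hM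
  have hMf : M.Finite := by
    have : M ⊆ ⋃ p ∈ {p : ℝ × ℝ | ∃ x y : Circ, x ≠ y ∧ F x = p ∧ F y = p}, {z | F z = p} := by
      rintro x ⟨y, hxy, he⟩
      simp only [mem_iUnion]
      exact ⟨F x, ⟨x, y, hxy, rfl, he.symm⟩, rfl⟩
    refine (hF.2.2.1.biUnion ?_).subset this
    intro p hp
    obtain ⟨x, y, -, hxy⟩ := hF.2.2.2.1 p hp
    rw [hxy]
    exact (finite_singleton y).insert x
  have hMc : ((fun t : ℝ => (t : Circ)) ⁻¹' M).Countable := by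
    have : (fun t : ℝ => (t : Circ)) ⁻¹' M = ⋃ x ∈ M, {t : ℝ | (t : Circ) = x} := by
      ext t; simp
    rw [this]
    refine hMf.countable.biUnion ?_
    intro x _
    obtain ⟨s, rfl⟩ := QuotientAddGroup.mk_surjective x
    refine (countable_range (fun n : ℤ => s + n * (2 * π))).mono ?_
    intro t ht
    obtain ⟨n, hn⟩ := (coe_eq_iff t s).1 ht
    exact ⟨n, hn.symm⟩
  have hd : Dense ((fun t : ℝ => (t : Circ)) ⁻¹' M)ᶜ := hMc.dense_compl ℝ
  obtain ⟨t₁, ht₁, ⟨hd1, hd2, hnr⟩⟩ := (mem_closure_iff_frequently.1 (hd t₀)).and_eventually ev |>.exists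
  have hsimple : ∀ z, F z = F t₁ → z = t₁ := by
    intro z hz
    by_contra hne
    exact ht₁ ⟨z, fun h => hne h.symm, hz.symm⟩
  obtain ⟨σ, hσ, hσ'⟩ : ∃ σ : ℝ, (σ = 1 ∨ σ = -1) ∧ 0 < σ * (deriv (liftOf F) t₁).1 := by
    rcases lt_or_gt_of_ne hd1 with h | h
    · exact ⟨-1, Or.inr rfl, by linarith⟩
    · exact ⟨1, Or.inl rfl, by linarith⟩
  obtain ⟨τ, hτ, hτ'⟩ : ∃ τ : ℝ, (τ = 1 ∨ τ = -1) ∧ τ * (deriv (liftOf F) t₁).2 < 0 := by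
    rcases lt_or_gt_of_ne hd2 with h | h
    · exact ⟨1, Or.inl rfl, by linarith⟩
    · exact ⟨-1, Or.inr rfl, by linarith⟩
  have hσ0 : σ ≠ 0 := by rcases hσ with h | h <;> rw [h] <;> norm_num
  have hτ0 : τ ≠ 0 := by rcases hτ with h | h <;> rw [h] <;> norm_num
  set S : ℝ × ℝ → ℝ × ℝ := fun p => (σ * p.1, τ * p.2) with hS
  have hSmem : S ∈ Sigma2 := by
    rcases hσ with rfl | rfl <;> rcases hτ with rfl | rfl
    · left; funext p; simp [hS]
    · right; right; left; funext p; simp [hS]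
    · right; left; funext p; simp [hS]
    · right; right; right; funext p; simp [hS]
  have hSc : Continuous S := by fun_prop
  have hSi : Function.Injective S := by
    rintro ⟨a, b⟩ ⟨c, d⟩ he
    simp only [hS, Prod.mk.injEq, mul_eq_mul_left_iff, hσ0, hτ0, or_false] at he
    ext <;> simp [he.1, he.2]
  have ev2 : ∀ᶠ t in 𝓝 t₁, 0 < σ * (deriv (liftOf F) t).1 ∧ τ * (deriv (liftOf F) t).2 < 0 :=
    ((continuous_const.mul cd1).continuousAt.eventually (lt_mem_nhds hσ')).and
      ((continuous_const.mul cd2).continuousAt.eventually (gt_mem_nhds hτ'))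
  obtain ⟨η, hη, hη'⟩ := Metric.nhds_basis_closedBall.eventually_iff.1 ev2
  have hη'' : ∀ t ∈ Icc (t₁ - η) (t₁ + η), 0 < σ * (deriv (liftOf F) t).1 ∧
      τ * (deriv (liftOf F) t).2 < 0 := by
    intro t ht
    rw [← Real.closedBall_eq_Icc] at ht
    exact hη' ht
  have D1 : ∀ t : ℝ, HasDerivAt (fun t : ℝ => ((S ∘ F) (t : Circ)).1) (σ * (deriv (liftOf F) t).1) t :=
    fun t => (hasDeriv_fst (hf.hasDeriv t)).const_mul σ
  have D2 : ∀ t : ℝ, HasDerivAt (fun t : ℝ => ((S ∘ F) (t : Circ)).2) (τ * (deriv (liftOf F) t).2) t :=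
    fun t => (hasDeriv_snd (hf.hasDeriv t)).const_mul τ
  obtain ⟨u, v, hu1, hu2, huv⟩ := corner (S ∘ F) (S ∘ G) (hSc.comp hFc) (hSc.comp hGc) t₁ η hη
    (strictMonoOn_of_deriv_pos (convex_Icc _ _) (fun t _ => (D1 t).continuousAt.continuousWithinAt)
      (fun t ht => by rw [(D1 t).deriv]; exact (hη'' t (interior_subset ht)).1))
    (strictAntiOn_of_deriv_neg (convex_Icc _ _) (fun t _ => (D2 t).continuousAt.continuousWithinAt)
      (fun t ht => by rw [(D2 t).deriv]; exact (hη'' t (interior_subset ht)).2))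
    (fun z hz => hsimple z (hSi hz))
    (fun z hz => hnr ⟨z, hSi hz⟩)
  exact huv (h S hSmem u v hu1 hu2)

lemma locinj {f g : ℝ → ℝ × ℝ} {a b : ℝ × ℝ} {t₀ s₀ : ℝ} (hf : HasDerivAt f a t₀)
    (hg : HasDerivAt g b s₀) (hc : cross a b ≠ 0) :
    ∀ᶠ z in 𝓝 (t₀, s₀), f z.1 = g z.2 → z = (t₀, s₀) := by
  set L : ℝ × ℝ →L[ℝ] ℝ × ℝ :=
    (ContinuousLinearMap.toSpanSingleton ℝ a).comp (ContinuousLinearMap.fst ℝ ℝ ℝ) -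
    (ContinuousLinearMap.toSpanSingleton ℝ b).comp (ContinuousLinearMap.snd ℝ ℝ ℝ) with hL
  have hd : HasFDerivAt (fun z : ℝ × ℝ => f z.1 - g z.2) L (t₀, s₀) := by
    apply HasFDerivAt.sub
    · exact HasFDerivAt.comp (t₀, s₀) (g := f) hf.hasFDerivAt hasFDerivAt_fst
    · exact HasFDerivAt.comp (t₀, s₀) (g := g) hg.hasFDerivAt hasFDerivAt_snd
  have hker : LinearMap.ker (L : ℝ × ℝ →ₗ[ℝ] ℝ × ℝ) = ⊥ := by
    rw [LinearMap.ker_eq_bot']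
    rintro ⟨x, y⟩ h
    have h1 : x * a.1 - y * b.1 = 0 := by simpa [hL] using congrArg Prod.fst h
    have h2 : x * a.2 - y * b.2 = 0 := by simpa [hL] using congrArg Prod.snd h
    have hx : x * cross a b = 0 := by
      simp only [cross]; linear_combination b.2 * h1 - b.1 * h2
    have hy : y * cross a b = 0 := by
      simp only [cross]; linear_combination a.2 * h1 - a.1 * h2
    ext
    · exact (mul_eq_zero.1 hx).resolve_right hc
    · exact (mul_eq_zero.1 hy).resolve_right hc
  obtain ⟨K, -, hK⟩ := LinearMap.exists_antilipschitzWith (L : ℝ × ℝ →ₗ[ℝ] ℝ × ℝ) hker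
  have := hd.eventually_ne (c := 0) ⟨K, hK⟩
  rw [eventually_nhdsWithin_iff] at this
  filter_upwards [this] with z hz h
  by_contra hne
  exact hz hne (sub_eq_zero.2 h)

lemma cross_trans {a b c : ℝ × ℝ} (ha : a ≠ 0) (h1 : cross a b = 0) (h2 : cross a c = 0) :
    cross b c = 0 := by
  simp only [cross] at *
  have e1 : a.1 * (b.1 * c.2 - b.2 * c.1) = 0 := by linear_combination b.1 * h2 - c.1 * h1
  have e2 : a.2 * (b.1 * c.2 - b.2 * c.1) = 0 := by linear_combination b.2 * h2 - c.2 * h1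
  by_contra hne
  exact ha (Prod.ext ((mul_eq_zero.1 e1).resolve_right hne) ((mul_eq_zero.1 e2).resolve_right hne))

lemma cross_comm {a b : ℝ × ℝ} (h : cross a b = 0) : cross b a = 0 := by
  simp only [cross] at *; linarith

lemma Curve.cont {g : ℝ → ℝ × ℝ} (hg : Curve g) : Continuous g := hg.c1.continuous

lemma shift_mem (s a : ℝ) : ∃ n : ℤ, s + n * (2 * π) ∈ Icc a (a + 2 * π) := by
  obtain ⟨n, hn, -⟩ := existsUnique_add_zsmul_mem_Ico (a := 2 * π) (by positivity) s a
  rw [zsmul_eq_mul] at hn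
  exact ⟨n, hn.1, hn.2.le⟩

lemma near_lemma {f g : ℝ → ℝ × ℝ} (hf : Curve f) (hg : Curve g) {t₀ s₀ : ℝ}
    (h0 : f t₀ = g s₀) (hc : cross (deriv f t₀) (deriv g s₀) = 0) {V : Set ℝ} (hV : V ∈ 𝓝 s₀) :
    ∀ᶠ t in 𝓝 t₀, t ≠ t₀ → ∀ s, f t = g s → ∃ s' ∈ V, f t = g s' := by
  have key : ∀ᶠ t in 𝓝 t₀, ∀ s ∈ Icc (s₀ - π) (s₀ - π + 2 * π), t ≠ t₀ → f t = g s → s ∈ V := by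
    refine isCompact_Icc.eventually_forall_of_forall_eventually
      (P := fun t s => t ≠ t₀ → f t = g s → s ∈ V) ?_
    intro y hy
    by_cases hys : y = s₀
    · subst hys
      filter_upwards [(continuous_snd.continuousAt : ContinuousAt Prod.snd (t₀, y)) hV] with z hz _ _
      exact hz
    by_cases he : f t₀ = g y
    · have : cross (deriv f t₀) (deriv g y) ≠ 0 := by
        intro hcy
        obtain ⟨n, hn⟩ := hg.clean y s₀ (he.symm.trans h0) (cross_trans (hf.ne t₀) hcy hc)
        have h1 := hy.1
        have h2 := hy.2
        have hπ := Real.pi_pos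
        have hn1 : (n : ℝ) < 1 := by by_contra hh; push Not at hh; nlinarith
        have hn2 : (-1 : ℝ) < n := by by_contra hh; push Not at hh; nlinarith
        have hn1' : n < 1 := by exact_mod_cast hn1
        have hn2' : -1 < n := by exact_mod_cast hn2
        have : n = 0 := by omega
        subst this
        exact hys (by simpa using hn)
      filter_upwards [locinj (hf.hasDeriv t₀) (hg.hasDeriv y) this] with z hz hzt hfg
      exact (hzt (congrArg Prod.fst (hz hfg))).elim
    · have c1 : ContinuousAt (fun z : ℝ × ℝ => f z.1) (t₀, y) :=
        (hf.cont.comp continuous_fst).continuousAt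
      have c2 : ContinuousAt (fun z : ℝ × ℝ => g z.2) (t₀, y) :=
        (hg.cont.comp continuous_snd).continuousAt
      filter_upwards [(ContinuousAt.ne_iff_eventually_ne c1 c2).1 he] with z hz _ hfg
      exact (hz hfg).elim
  filter_upwards [key] with t ht htt s hs
  obtain ⟨n, hn⟩ := shift_mem s (s₀ - π)
  have : f t = g (s + n * (2 * π)) := by rw [hg.per, hs]
  exact ⟨_, ht _ hn htt this, this⟩

lemma inv1 {φ : ℝ → ℝ} (h : ContDiff ℝ 1 φ) {s₀ : ℝ} (hd : deriv φ s₀ ≠ 0) :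
    ∃ ψ : ℝ → ℝ, ContDiffAt ℝ 1 ψ (φ s₀) ∧ (∀ᶠ x in 𝓝 s₀, ψ (φ x) = x) ∧
      ∀ᶠ y in 𝓝 (φ s₀), φ (ψ y) = y := by
  have hs : HasStrictDerivAt φ (deriv φ s₀) s₀ := h.contDiffAt.hasStrictDerivAt one_ne_zero
  have hs' := hs.hasStrictFDerivAt_equiv hd
  refine ⟨h.contDiffAt.localInverse hs'.hasFDerivAt one_ne_zero,
    h.contDiffAt.to_localInverse hs'.hasFDerivAt one_ne_zero, ?_, ?_⟩
  · exact hs'.eventually_left_inverse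
  · exact hs'.eventually_right_inverse

lemma loc1 {f g : ℝ → ℝ × ℝ} (hf : Curve f) (hg : Curve g)
    (UF : ∀ t, (deriv f t).1 ≠ 0 → (deriv f t).2 ≠ 0 → ∃ s, f t = g s)
    (UG : ∀ t, (deriv g t).1 ≠ 0 → (deriv g t).2 ≠ 0 → ∃ s, g t = f s) {t₀ s₀ : ℝ}
    (h0 : f t₀ = g s₀) (hc : cross (deriv f t₀) (deriv g s₀) = 0) (h1 : (deriv f t₀).1 ≠ 0) :
    ∃ k : ℝ → ℝ, ContDiffAt ℝ 1 k t₀ ∧ k t₀ = s₀ ∧ ∀ᶠ t in 𝓝 t₀, g (k t) = f t := by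
  have h1' : (deriv g s₀).1 ≠ 0 := by
    intro h
    simp only [cross, h, mul_zero, sub_zero, mul_eq_zero, h1, false_or] at hc
    exact hg.ne s₀ (Prod.ext h hc)
  have df1 := fun t => hasDeriv_fst (hf.hasDeriv t)
  have df2 := fun t => hasDeriv_snd (hf.hasDeriv t)
  have dg1 := fun t => hasDeriv_fst (hg.hasDeriv t)
  have dg2 := fun t => hasDeriv_snd (hg.hasDeriv t)
  obtain ⟨ψ, hψc, hψl, hψr⟩ := inv1 (φ := fun t => (g t).1) (s₀ := s₀)
    (contDiff_fst.comp hg.c1) (by rwa [(dg1 s₀).deriv])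
  obtain ⟨χ, hχc, hχl, hχr⟩ := inv1 (φ := fun t => (f t).1) (s₀ := t₀)
    (contDiff_fst.comp hf.c1) (by rwa [(df1 t₀).deriv])
  have hfg1 : (f t₀).1 = (g s₀).1 := by rw [h0]
  set k : ℝ → ℝ := fun t => ψ (f t).1 with hk
  have hk0 : k t₀ = s₀ := by
    simp only [hk, hfg1]; exact hψl.self_of_nhds
  have hkc : ContDiffAt ℝ 1 k t₀ := by
    have : ContDiffAt ℝ 1 ψ (f t₀).1 := by rw [hfg1]; exact hψc
    exact ContDiffAt.comp t₀ (g := ψ) this (contDiff_fst.comp hf.c1).contDiffAt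
  refine ⟨k, hkc, hk0, ?_⟩
  have kcont : Tendsto k (𝓝 t₀) (𝓝 s₀) := by
    have := hkc.continuousAt.tendsto
    rwa [hk0] at this
  have f1cont : Tendsto (fun t => (f t).1) (𝓝 t₀) (𝓝 (g s₀).1) := by
    rw [← hfg1]; exact (df1 t₀).continuousAt
  have E1 := near_lemma hf hg h0 hc hψl
  have E2 := kcont.eventually (near_lemma hg hf h0.symm (cross_comm hc) hχl)
  have E3 := f1cont.eventually hψr
  have E4 : ∀ᶠ t in 𝓝 t₀, (deriv f t).1 ≠ 0 :=
    (continuous_fst.comp hf.contDeriv).continuousAt.eventually_ne h1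
  have E5 : ∀ᶠ t in 𝓝 t₀, (deriv g (k t)).1 ≠ 0 :=
    kcont.eventually ((continuous_fst.comp hg.contDeriv).continuousAt.eventually_ne h1')
  have E6 : ∀ᶠ t in 𝓝 t₀, DifferentiableAt ℝ k t :=
    (hkc.eventually (by simp)).mono fun t ht => ht.differentiableAt one_ne_zero
  have E : ∀ᶠ t in 𝓝 t₀, DifferentiableAt ℝ k t ∧ (g (k t)).1 = (f t).1 ∧
      ((deriv f t).2 ≠ 0 → g (k t) = f t) ∧ ((deriv g (k t)).2 ≠ 0 → g (k t) = f t) := by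
    filter_upwards [E1, E2, E3, E4, E5, E6, hχl] with t e1 e2 e3 e4 e5 e6 e7
    refine ⟨e6, e3, fun h2 => ?_, fun h2 => ?_⟩
    · by_cases htt : t = t₀
      · rw [htt, hk0, h0]
      obtain ⟨s, hs⟩ := UF t e4 h2
      obtain ⟨s', hs', he⟩ := e1 htt s hs
      have : k t = s' := by
        simp only [hk, he]; exact hs'
      rw [this, he]
    · by_cases hks : k t = s₀
      · have hft : (f t).1 = (f t₀).1 := by rw [← e3, hfg1, ← hks]
        have htt : t = t₀ := by
          rw [← e7, hft]; exact hχl.self_of_nhds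
        rw [htt, hk0, h0]
      obtain ⟨s, hs⟩ := UG (k t) e5 h2
      obtain ⟨t', ht', he⟩ := e2 hks s hs
      have hh : (f t').1 = (f t).1 := by rw [← he]; exact e3
      have : t' = t := by
        rw [← e7, ← hh]; exact ht'.symm
      rw [he, this]
  obtain ⟨r, hr, hball⟩ := Metric.eventually_nhds_iff_ball.1 E
  set D : ℝ → ℝ := fun t => ((f t).2 - (g (k t)).2) with hD
  have dD : ∀ t ∈ Metric.ball t₀ r, HasDerivAt (fun t => D t ^ 2) 0 t := by
    intro t ht
    obtain ⟨b1, b2, b3, b4⟩ := hball t ht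
    have hd : HasDerivAt D ((deriv f t).2 - (deriv g (k t)).2 * deriv k t) t :=
      (df2 t).sub (HasDerivAt.comp t (h₂ := fun s => (g s).2) (dg2 (k t)) b1.hasDerivAt)
    have := hd.pow 2
    convert! this using 1
    by_cases hD0 : D t = 0
    · simp [hD0]
    have hne : ¬ g (k t) = f t := fun hh => hD0 (by simp [hD, hh])
    have z1 : (deriv f t).2 = 0 := by by_contra hh; exact hne (b3 hh)
    have z2 : (deriv g (k t)).2 = 0 := by by_contra hh; exact hne (b4 hh)
    simp [z1, z2]
  have hconst : ∀ t ∈ Metric.ball t₀ r, D t = 0 := by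
    intro t ht
    have := Metric.isOpen_ball.is_const_of_deriv_eq_zero (convex_ball t₀ r).isPreconnected
      (f := fun t => D t ^ 2)
      (fun t ht => (dD t ht).differentiableAt.differentiableWithinAt)
      (fun t ht => (dD t ht).deriv) ht (Metric.mem_ball_self hr)
    have hD0 : D t₀ = 0 := by simp [hD, hk0, h0]
    simpa [hD0] using this
  filter_upwards [Metric.ball_mem_nhds t₀ hr] with t ht
  exact Prod.ext (hball t ht).2.1 (sub_eq_zero.1 (hconst t ht)).symm

lemma deriv_swap {g : ℝ → ℝ × ℝ} (hg : Curve g) (t : ℝ) :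
    deriv (fun t => (g t).swap) t = (deriv g t).swap :=
  ((hasDeriv_snd (hg.hasDeriv t)).prodMk (hasDeriv_fst (hg.hasDeriv t))).deriv

lemma cross_swap (a b : ℝ × ℝ) : cross a.swap b.swap = - cross a b := by
  simp [cross]

lemma Curve.swap {g : ℝ → ℝ × ℝ} (hg : Curve g) : Curve (fun t => (g t).swap) where
  c1 := (contDiff_snd.prodMk contDiff_fst).comp hg.c1
  ne t h := hg.ne t (by
    rw [deriv_swap hg] at h
    simpa using congrArg Prod.swap h)
  per t n := by rw [hg.per]
  clean t s h1 h2 := by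
    rw [deriv_swap hg, deriv_swap hg, cross_swap, neg_eq_zero] at h2
    exact hg.clean t s (Prod.swap_injective h1) h2

lemma loc2 {f g : ℝ → ℝ × ℝ} (hf : Curve f) (hg : Curve g)
    (UF : ∀ t, (deriv f t).1 ≠ 0 → (deriv f t).2 ≠ 0 → ∃ s, f t = g s)
    (UG : ∀ t, (deriv g t).1 ≠ 0 → (deriv g t).2 ≠ 0 → ∃ s, g t = f s) {t₀ s₀ : ℝ}
    (h0 : f t₀ = g s₀) (hc : cross (deriv f t₀) (deriv g s₀) = 0) :
    ∃ k : ℝ → ℝ, ContDiffAt ℝ 1 k t₀ ∧ k t₀ = s₀ ∧ ∀ᶠ t in 𝓝 t₀, g (k t) = f t := by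
  by_cases h1 : (deriv f t₀).1 = 0
  · have h2 : (deriv f t₀).2 ≠ 0 := fun h => hf.ne t₀ (Prod.ext h1 h)
    obtain ⟨k, a, b, c⟩ := loc1 hf.swap hg.swap
      (fun t e1 e2 => by
        rw [deriv_swap hf] at e1 e2
        obtain ⟨s, hs⟩ := UF t e2 e1
        exact ⟨s, by rw [hs]⟩)
      (fun t e1 e2 => by
        rw [deriv_swap hg] at e1 e2
        obtain ⟨s, hs⟩ := UG t e2 e1
        exact ⟨s, by rw [hs]⟩) (t₀ := t₀) (s₀ := s₀) (by rw [h0])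
      (by rw [deriv_swap hf, deriv_swap hg, cross_swap, hc, neg_zero])
      (by rw [deriv_swap hf]; exact h2)
    exact ⟨k, a, b, c.mono fun t ht => Prod.swap_injective ht⟩
  · exact loc1 hf hg UF UG h0 hc h1

def CRel (f g : ℝ → ℝ × ℝ) (t s : ℝ) : Prop := f t = g s ∧ cross (deriv f t) (deriv g s) = 0

lemma Curve.deriv_per {g : ℝ → ℝ × ℝ} (hg : Curve g) (t : ℝ) (n : ℤ) :
    deriv g (t + n * (2 * π)) = deriv g t := by
  rw [← deriv_comp_add_const]
  congr 1
  funext s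
  exact hg.per s n

lemma CRel.right {f g : ℝ → ℝ × ℝ} (hg : Curve g) {t s : ℝ} (h : CRel f g t s) (n : ℤ) :
    CRel f g t (s + n * (2 * π)) := by
  unfold CRel
  rw [hg.per, hg.deriv_per]
  exact h

lemma CRel.left {f g : ℝ → ℝ × ℝ} (hf : Curve f) {t s : ℝ} (h : CRel f g t s) (n : ℤ) :
    CRel f g (t + n * (2 * π)) s := by
  unfold CRel
  rw [hf.per, hf.deriv_per]
  exact h

lemma CRel.uniq {f g : ℝ → ℝ × ℝ} (hf : Curve f) (hg : Curve g) {t s s' : ℝ} (h : CRel f g t s)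
    (h' : CRel f g t s') : ∃ n : ℤ, s = s' + n * (2 * π) :=
  hg.clean s s' (h.1.symm.trans h'.1) (cross_trans (hf.ne t) h.2 h'.2)

lemma CRel.uniq' {f g : ℝ → ℝ × ℝ} (hf : Curve f) (hg : Curve g) {t t' s : ℝ} (h : CRel f g t s)
    (h' : CRel f g t' s) : ∃ n : ℤ, t = t' + n * (2 * π) :=
  hf.clean t t' (h.1.trans h'.1.symm)
    (cross_trans (hg.ne s) (cross_comm h.2) (cross_comm h'.2))

lemma loc3 {f g : ℝ → ℝ × ℝ} (hf : Curve f) (hg : Curve g)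
    (UF : ∀ t, (deriv f t).1 ≠ 0 → (deriv f t).2 ≠ 0 → ∃ s, f t = g s)
    (UG : ∀ t, (deriv g t).1 ≠ 0 → (deriv g t).2 ≠ 0 → ∃ s, g t = f s) {t₀ s₀ : ℝ}
    (h0 : CRel f g t₀ s₀) :
    ∃ k : ℝ → ℝ, ContDiffAt ℝ 1 k t₀ ∧ k t₀ = s₀ ∧ deriv k t₀ ≠ 0 ∧
      ∀ᶠ t in 𝓝 t₀, CRel f g t (k t) := by
  obtain ⟨k, a, b, c⟩ := loc2 hf hg UF UG h0.1 h0.2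
  have hd : ∀ᶠ t in 𝓝 t₀, deriv f t = deriv k t • deriv g (k t) := by
    have E6 : ∀ᶠ t in 𝓝 t₀, DifferentiableAt ℝ k t :=
      (a.eventually (by simp)).mono fun t ht => ht.differentiableAt one_ne_zero
    filter_upwards [E6, eventually_eventually_nhds.2 c] with t h1 h2
    have : HasDerivAt (fun t => g (k t)) (deriv k t • deriv g (k t)) t :=
      HasDerivAt.scomp t (hg.hasDeriv (k t)) h1.hasDerivAt
    rw [← this.deriv]
    exact (EventuallyEq.deriv_eq h2).symm
  refine ⟨k, a, b, ?_, ?_⟩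
  · intro h
    have := hd.self_of_nhds
    rw [h, zero_smul] at this
    exact hf.ne t₀ this
  · filter_upwards [c, hd] with t h1 h2
    refine ⟨h1.symm, ?_⟩
    rw [h2]
    simp only [cross, Prod.smul_fst, Prod.smul_snd, smul_eq_mul]
    ring

lemma CRel.closed {f g : ℝ → ℝ × ℝ} (hf : Curve f) (hg : Curve g) :
    IsClosed {z : ℝ × ℝ | CRel f g z.1 z.2} := by
  have c1 : Continuous fun z : ℝ × ℝ => f z.1 := hf.cont.comp continuous_fst
  have c2 : Continuous fun z : ℝ × ℝ => g z.2 := hg.cont.comp continuous_snd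
  have c3 : Continuous fun z : ℝ × ℝ => deriv f z.1 := hf.contDeriv.comp continuous_fst
  have c4 : Continuous fun z : ℝ × ℝ => deriv g z.2 := hg.contDeriv.comp continuous_snd
  refine (isClosed_eq c1 c2).inter (isClosed_eq (f := fun z : ℝ × ℝ =>
    cross (deriv f z.1) (deriv g z.2)) ?_ continuous_const)
  unfold cross
  fun_prop

lemma all_rel {f g : ℝ → ℝ × ℝ} (hf : Curve f) (hg : Curve g)
    (UF : ∀ t, (deriv f t).1 ≠ 0 → (deriv f t).2 ≠ 0 → ∃ s, f t = g s)
    (UG : ∀ t, (deriv g t).1 ≠ 0 → (deriv g t).2 ≠ 0 → ∃ s, g t = f s) :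
    ∀ t, ∃ s, CRel f g t s := by
  have c1 : Continuous fun t => (deriv f t).1 := continuous_fst.comp hf.contDeriv
  have c2 : Continuous fun t => (deriv f t).2 := continuous_snd.comp hf.contDeriv
  set S : Set ℝ := {t | ∃ s, CRel f g t s} with hS
  have hopen : IsOpen S := by
    rw [isOpen_iff_mem_nhds]
    rintro t ⟨s, hs⟩
    obtain ⟨k, -, -, -, hk⟩ := loc3 hf hg UF UG hs
    exact hk.mono fun t' ht' => ⟨_, ht'⟩
  have hclosed : IsClosed S := by
    rw [← isOpen_compl_iff, isOpen_iff_mem_nhds]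
    intro t ht
    have : ∀ᶠ t' in 𝓝 t, ∀ s ∈ Icc (0 : ℝ) (0 + 2 * π), ¬ CRel f g t' s := by
      refine isCompact_Icc.eventually_forall_of_forall_eventually
        (P := fun t s => ¬ CRel f g t s) ?_
      intro y _
      exact (CRel.closed hf hg).isOpen_compl.mem_nhds fun h => ht ⟨y, h⟩
    filter_upwards [this] with t' ht'
    rintro ⟨s, hs⟩
    obtain ⟨n, hn⟩ := shift_mem s 0
    exact ht' _ hn (hs.right hg n)
  have hU : ∃ t, (deriv f t).1 ≠ 0 ∧ (deriv f t).2 ≠ 0 := by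
    by_contra hcon
    push Not at hcon
    have hper : f 0 = f (2 * π) := by
      have := hf.per 0 1
      simpa using this.symm
    obtain ⟨a, -, ha⟩ := exists_hasDerivAt_eq_zero (f := fun t => (f t).1)
      (f' := fun t => (deriv f t).1) (a := 0) (b := 2 * π) (by positivity)
      (continuous_fst.comp hf.cont).continuousOn (by simp [hper])
      (fun t _ => hasDeriv_fst (hf.hasDeriv t))
    obtain ⟨b, -, hb⟩ := exists_hasDerivAt_eq_zero (f := fun t => (f t).2)
      (f' := fun t => (deriv f t).2) (a := 0) (b := 2 * π) (by positivity)
      (continuous_snd.comp hf.cont).continuousOn (by simp [hper])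
      (fun t _ => hasDeriv_snd (hf.hasDeriv t))
    have := isPreconnected_univ (α := ℝ) {t | (deriv f t).1 ≠ 0} {t | (deriv f t).2 ≠ 0}
      (isOpen_ne_fun c1 continuous_const) (isOpen_ne_fun c2 continuous_const)
      (fun t _ => by
        by_cases h : (deriv f t).1 = 0
        · right; exact fun h' => hf.ne t (Prod.ext h h')
        · left; exact h)
      ⟨b, trivial, fun h => hf.ne b (Prod.ext h hb)⟩
      ⟨a, trivial, fun h => hf.ne a (Prod.ext ha h)⟩
    obtain ⟨t, -, h1, h2⟩ := this
    exact h2 (hcon t h1)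
  have hne : S.Nonempty := by
    obtain ⟨t, h1, h2⟩ := hU
    refine ⟨t, ?_⟩
    by_contra hcon
    have hcon' : ∀ s, ¬ CRel f g t s := fun s hs => hcon ⟨s, hs⟩
    have : ∀ᶠ t' in 𝓝 t, ∀ s ∈ Icc (0 : ℝ) (0 + 2 * π), f t' = g s → t' = t := by
      refine isCompact_Icc.eventually_forall_of_forall_eventually
        (P := fun t' s => f t' = g s → t' = t) ?_
      intro y _
      by_cases he : f t = g y
      · have hc : cross (deriv f t) (deriv g y) ≠ 0 := fun h => hcon' y ⟨he, h⟩
        filter_upwards [locinj (hf.hasDeriv t) (hg.hasDeriv y) hc] with z hz hfg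
        exact congrArg Prod.fst (hz hfg)
      · have c1 : ContinuousAt (fun z : ℝ × ℝ => f z.1) (t, y) :=
          (hf.cont.comp continuous_fst).continuousAt
        have c2 : ContinuousAt (fun z : ℝ × ℝ => g z.2) (t, y) :=
          (hg.cont.comp continuous_snd).continuousAt
        filter_upwards [(ContinuousAt.ne_iff_eventually_ne c1 c2).1 he] with z hz hfg
        exact (hz hfg).elim
    have h3 : ∀ᶠ t' in 𝓝 t, t' = t := by
      filter_upwards [this, c1.continuousAt.eventually_ne h1, c2.continuousAt.eventually_ne h2]
        with t' e0 e1 e2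
      obtain ⟨s, hs⟩ := UF t' e1 e2
      obtain ⟨n, hn⟩ := shift_mem s 0
      exact e0 _ hn (by rw [hg.per, hs])
    have h4 : ∃ᶠ t' in 𝓝 t, t' ≠ t :=
      (frequently_iff_neBot.2 (inferInstanceAs (𝓝[≠] t).NeBot))
    obtain ⟨t', e1, e2⟩ := (h4.and_eventually h3).exists
    exact e1 e2
  have := IsClopen.eq_univ ⟨hclosed, hopen⟩ hne
  intro t
  have ht : t ∈ S := this ▸ mem_univ t
  exact ht

lemma degree_one {h : ℝ → ℝ} (hc : Continuous h) (hm : StrictMono h)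
    (hn : ∀ t, ∃ n : ℤ, h (t + 2 * π) = h t + n * (2 * π))
    (hi : ∀ s t, ∀ n : ℤ, h s = h t + n * (2 * π) → ∃ m : ℤ, s = t + m * (2 * π)) (t : ℝ) :
    h (t + 2 * π) = h t + 2 * π := by
  have hπ := Real.pi_pos
  obtain ⟨n, hn⟩ := hn t
  have h1 : h t < h (t + 2 * π) := hm (by linarith)
  have n0 : (0 : ℝ) < n := by by_contra hh; push Not at hh; nlinarith
  have n0' : 0 < n := by exact_mod_cast n0
  rcases eq_or_lt_of_le (show 1 ≤ n by omega) with hn1 | hn1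
  · rw [hn, ← hn1]; simp
  · exfalso
    have hn1' : (1 : ℝ) < n := by exact_mod_cast hn1
    obtain ⟨s, hs, hs'⟩ := intermediate_value_Icc (show t ≤ t + 2 * π by linarith) hc.continuousOn
      (show h t + 2 * π ∈ Icc (h t) (h (t + 2 * π)) from ⟨by linarith, by nlinarith⟩)
    have l1 : t < s := hm.lt_iff_lt.1 (by linarith)
    have l2 : s < t + 2 * π := hm.lt_iff_lt.1 (by nlinarith)
    obtain ⟨m, hm'⟩ := hi s t 1 (by rw [hs']; simp)
    have m0 : (0 : ℝ) < m := by by_contra hh; push Not at hh; nlinarith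
    have m1 : (m : ℝ) < 1 := by by_contra hh; push Not at hh; nlinarith
    have m0' : 0 < m := by exact_mod_cast m0
    have m1' : m < 1 := by exact_mod_cast m1
    omega

lemma exists_diffeo {f g : ℝ → ℝ × ℝ} (hf : Curve f) (hg : Curve g)
    (UF : ∀ t, (deriv f t).1 ≠ 0 → (deriv f t).2 ≠ 0 → ∃ s, f t = g s)
    (UG : ∀ t, (deriv g t).1 ≠ 0 → (deriv g t).2 ≠ 0 → ∃ s, g t = f s) :
    ∃ h : ℝ → ℝ, ContDiff ℝ 1 h ∧ (∀ t, deriv h t ≠ 0) ∧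
    ((∀ t, h (t + 2 * π) = h t + 2 * π) ∨ (∀ t, h (t + 2 * π) = h t - 2 * π)) ∧
    ∀ t, f t = g (h t) := by
  have : Fact (0 < 2 * π) := ⟨by positivity⟩
  have hπ := Real.pi_pos
  choose φ hφ using all_rel hf hg UF UG
  have hcont : Continuous fun t => (φ t : Circ) := by
    rw [continuous_iff_continuousAt]
    intro t₀
    obtain ⟨k, kc, k0, -, hk⟩ := loc3 hf hg UF UG (hφ t₀)
    have h1 : ContinuousAt (fun t => (k t : Circ)) t₀ :=
      ContinuousAt.comp (g := fun t : ℝ => (t : Circ))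
        (AddCircle.continuous_mk' _).continuousAt kc.continuousAt
    refine h1.congr ?_
    filter_upwards [hk] with t ht
    exact (coe_eq_iff _ _).2 (ht.uniq hf hg (hφ t))
  obtain ⟨h, ⟨-, hh⟩, -⟩ := (AddCircle.isCoveringMap_coe (2 * π)).existsUnique_continuousMap_lifts
    ⟨_, hcont⟩ 0 (φ 0) rfl
  have hR : ∀ t, CRel f g t (h t) := by
    intro t
    obtain ⟨n, hn⟩ := (coe_eq_iff _ _).1 (congrFun hh t)
    rw [hn]
    exact (hφ t).right hg n
  have hloc : ∀ t, ContDiffAt ℝ 1 h t ∧ deriv h t ≠ 0 := by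
    intro t₀
    obtain ⟨k, kc, k0, kd, hk⟩ := loc3 hf hg UF UG (hR t₀)
    have hd : Tendsto (fun t => h t - k t) (𝓝 t₀) (𝓝 0) := by
      have := (h.continuous.continuousAt (x := t₀)).tendsto.sub kc.continuousAt.tendsto
      rwa [k0, sub_self] at this
    have he : h =ᶠ[𝓝 t₀] k := by
      filter_upwards [hk, hd.eventually (Ioo_mem_nhds (show -(2 * π) < 0 by linarith)
        (show 0 < 2 * π by linarith))] with t h1 h2
      obtain ⟨n, hn⟩ := (hR t).uniq hf hg h1
      have e1 := h2.1
      have e2 := h2.2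
      have hn1 : (n : ℝ) < 1 := by by_contra hh; push Not at hh; nlinarith
      have hn2 : (-1 : ℝ) < n := by by_contra hh; push Not at hh; nlinarith
      have hn1' : n < 1 := by exact_mod_cast hn1
      have hn2' : -1 < n := by exact_mod_cast hn2
      have : n = 0 := by omega
      rw [hn, this]; simp
    exact ⟨kc.congr_of_eventuallyEq he, by rwa [he.deriv_eq]⟩
  have hC : ContDiff ℝ 1 h := contDiff_iff_contDiffAt.2 fun t => (hloc t).1
  have hn : ∀ t, ∃ n : ℤ, h (t + 2 * π) = h t + n * (2 * π) := by
    intro t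
    have h1 := (hR t).left hf 1
    simp only [Int.cast_one, one_mul] at h1
    exact (hR (t + 2 * π)).uniq hf hg h1
  have hi : ∀ s t, ∀ n : ℤ, h s = h t + n * (2 * π) → ∃ m : ℤ, s = t + m * (2 * π) := by
    intro s t n he
    have h1 := hR s
    rw [he] at h1
    exact h1.uniq' hf hg ((hR t).right hg n)
  refine ⟨h, hC, fun t => (hloc t).2, ?_, fun t => (hR t).1⟩
  have hdc : Continuous (deriv h) := hC.continuous_deriv le_rfl
  by_cases hs : ∀ t, 0 < deriv h t
  · left
    exact degree_one h.continuous (strictMono_of_deriv_pos hs) hn hi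
  · right
    push Not at hs
    obtain ⟨t₁, ht₁⟩ := hs
    have hs' : ∀ t, deriv h t < 0 := by
      intro t
      by_contra hcon
      push Not at hcon
      obtain ⟨c, hc⟩ := mem_range_of_exists_le_of_exists_ge hdc ⟨t₁, ht₁⟩ ⟨t, hcon⟩
      exact (hloc c).2 hc
    have := degree_one (h := fun t => - h t) h.continuous.neg (strictAnti_of_deriv_neg hs').neg
      (fun t => by
        obtain ⟨n, hn⟩ := hn t
        exact ⟨-n, by rw [hn]; push_cast; ring⟩)
      (fun s t n he => hi s t (-n) (by push_cast; linarith))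
    intro t
    have := this t
    linarith

/-- Theorem 1: if two generic functions, composed with every element of the reflection
group `Σ₂`, have the same persistent Betti numbers on all of `Δ⁺`, then they differ
by a C¹-diffeomorphism of the circle. -/
theorem uniqueness_of_model (F G : Circ → ℝ × ℝ)
    (hF : Generic F) (hG : Generic G)
    (h : ∀ s ∈ Sigma2, ∀ u v : ℝ × ℝ, u.1 < v.1 → u.2 < v.2 →
      persBetti (s ∘ F) u v = persBetti (s ∘ G) u v) :
    ∃ H : Circ → Circ, CircleDiffeo H ∧ G ∘ H = F := by
  have hf := curve_of_generic hF
  have hg := curve_of_generic hG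
  obtain ⟨k, hk1, hk2, hk3, hk4⟩ := exists_diffeo hf hg (range_sub_s6 F G hF hG h)
    (range_sub_s6 G F hG hF (fun s hs u v h1 h2 => (h s hs u v h1 h2).symm))
  have hper : Function.Periodic (fun t : ℝ => ((k t : ℝ) : Circ)) (2 * π) := by
    intro t
    rcases hk3 with h3 | h3
    · exact (coe_eq_iff _ _).2 ⟨1, by simp [h3]⟩
    · exact (coe_eq_iff _ _).2 ⟨-1, by simp [h3]; ring⟩
  refine ⟨hper.lift, ⟨k, hk1, hk2, hk3, fun t => hper.lift_coe t⟩, ?_⟩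
  funext x
  obtain ⟨t, rfl⟩ := QuotientAddGroup.mk_surjective x
  exact (hk4 t).symm
end
end
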